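/- arXiv:1811.00049 — 2 statements merged into one kernel-verified Lean document; each statement's English description precedes it below -/
import Mathlib

section
/- Let h be odd, let w be a divisor of q+1 with 3 | w, and let L̄ ≤ M_ℓ be a subgroup such that |L̄ ∩ Z| = w and the quotient L̄/(L̄ ∩ Z) is isomorphic to SL(2,2) (equivalently, to the symmetric group on 3 letters). Then the number N of orbits of L̄ acting on O equals (q+4)/6 + (q+1)/w + (q+1)(q²−q−2)/(6w). -/
/-!
The orbits are counted with Burnside's lemma. A point of the Hermitian curve is either affine,
`(x : y : 1)` with `x^(q+1) - y^(q+1) = 1` (there are `q³ - q` of these), or at infinity,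
`(t : 1 : 0)` with `t^(q+1) = 1` (there are `q + 1`). An element of `L` fixes an affine point when
its upper left `2 × 2` block fixes the vector `(x, y)`, and a point at infinity when `(t, 1)` is an
eigenvector. The elements are sorted by their image in `S₃`.

* The `w` scalars in `L` fix all points at infinity, and only the identity fixes affine points,
  namely all of them.
* An element over an involution has scalar square and is not scalar, so in characteristic two its
  block has trace `0`. It has one eigenline, which is isotropic: it fixes one point at infinity and
  no affine point (`fixInf_involution`, `fixAff_involution`).
* An element over a 3-cycle has scalar cube, so by Cayley–Hamilton its trace `T` and determinant
  satisfy `T² = det` (`three_data`) and its eigenvalues are `ωT, ω²T`, with `ω` a primitive cube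
  root of unity. Since `3 ∣ q + 1`, the eigenlines are not isotropic, so no point at infinity is
  fixed (`fixInf_three`); `q + 1` affine points are fixed if `1 + T + T² = 0`, and none otherwise
  (`fixAff_three`, `fixAff_three_empty`). Conjugation by an element over a suitable involution
  inverts the 3-cycle, which shows that `T²` is a scalar of `L`. So is `T³`, the scalar of `g³`,
  hence so is `T` (`exists_blockTrace_one`). Therefore `T` takes each scalar of `L` as value
  exactly once on the fibre, and as `3 ∣ w` exactly two elements of the fibre satisfy
  `1 + T + T² = 0`.

Altogether the number of fixed pairs is `(q³ - q) + w (q + 1) + 3 w + 2 · 2 (q + 1)`, which is to be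
divided by `|L| = 6 w`.
-/

open Matrix

noncomputable def glAct {F : Type*} [Field F] (M : GL (Fin 3) F)
    (x : Projectivization F (Fin 3 → F)) : Projectivization F (Fin 3 → F) :=
  Projectivization.map
    ((LinearMap.GeneralLinearGroup.generalLinearEquiv F (Fin 3 → F)
        (Matrix.GeneralLinearGroup.toLin M)).toLinearMap)
    ((LinearMap.GeneralLinearGroup.generalLinearEquiv F (Fin 3 → F)
        (Matrix.GeneralLinearGroup.toLin M)).injective) x

noncomputable def numOrbits {F : Type*} [Field F] (L : Subgroup (GL (Fin 3) F))
    (O : Set (Projectivization F (Fin 3 → F))) : ℕ :=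
  Nat.card ((fun x => {y | ∃ g ∈ L, glAct g x = y}) '' O :
    Set (Set (Projectivization F (Fin 3 → F))))

def hermitianPts (q : ℕ) (F : Type*) [Field F] : Set (Projectivization F (Fin 3 → F)) :=
  {x | x.rep 1 ^ (q + 1) = x.rep 0 ^ (q + 1) - x.rep 2 ^ (q + 1)}

def MlSet (q : ℕ) (F : Type*) [Field F] : Set (GL (Fin 3) F) :=
  {M | ∃ a c τ : F, a ^ (q + 1) - c ^ (q + 1) = 1 ∧ τ ^ (q + 1) = 1 ∧
    (M : Matrix (Fin 3) (Fin 3) F) = !![a, τ * c ^ q, 0; c, τ * a ^ q, 0; 0, 0, 1]}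

def ZSet (q : ℕ) (F : Type*) [Field F] : Set (GL (Fin 3) F) :=
  {M | ∃ ε : F, ε ^ (q + 1) = 1 ∧ (M : Matrix (Fin 3) (Fin 3) F) = Matrix.diagonal ![ε, ε, 1]}

/-! ### Norm equations in a field with `q²` elements -/

/-- The fibres of the norm `y ↦ y^(q+1)` over the nonzero elements of the subfield with `q`
elements all have size `q + 1`. -/
lemma card_norm_fibre {F : Type*} [Field F] [Fintype F] [DecidableEq F] {q : ℕ} (hq : 2 ≤ q)
    (hF : Fintype.card F = q ^ 2) {k : F} (hk : k ≠ 0) (hkq : k ^ q = k) :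
    (Finset.univ.filter (fun y : F => y ^ (q + 1) = k)).card = q + 1 := by
  obtain ⟨g, hg⟩ := IsCyclic.exists_generator (α := Fˣ)
  have ho : orderOf g = (q + 1) * (q - 1) := by
    rw [orderOf_eq_card_of_forall_mem_zpowers hg, Nat.card_units, Nat.card_eq_fintype_card, hF]
    obtain ⟨r, rfl⟩ := Nat.exists_eq_add_of_le hq
    rw [show 2 + r - 1 = r + 1 by omega, Nat.sub_eq_iff_eq_add (Nat.one_le_pow _ _ (by omega))]
    ring
  have hprim : IsPrimitiveRoot ((g : F) ^ (q - 1)) (q + 1) := by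
    have hg' : IsPrimitiveRoot (g : F) ((q + 1) * (q - 1)) := by
      rw [← ho, ← orderOf_units]; exact IsPrimitiveRoot.orderOf _
    exact hg'.pow (Nat.mul_pos (by omega) (by omega)) (mul_comm _ _)
  have hex : ∃ y : F, y ^ (q + 1) = k := by
    obtain ⟨m, hm⟩ := (hg (Units.mk0 k hk))
    have h1 : (Units.mk0 k hk) ^ (q - 1) = 1 := by
      apply Units.ext
      have : k ^ (q - 1) * k = 1 * k := by
        rw [← pow_succ, Nat.sub_add_cancel (by omega), hkq, one_mul]
      simpa using mul_right_cancel₀ hk this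
    have h2 : (orderOf g : ℤ) ∣ m * (q - 1 : ℕ) := by
      rw [orderOf_dvd_iff_zpow_eq_one, _root_.zpow_mul]
      simp only at hm
      rw [hm, zpow_natCast, h1]
    rw [ho] at h2
    rw [Nat.cast_mul] at h2
    obtain ⟨n, rfl⟩ := Int.dvd_of_mul_dvd_mul_right
      (show ((q - 1 : ℕ) : ℤ) ≠ 0 by omega) h2
    refine ⟨((g ^ n : Fˣ) : F), ?_⟩
    have : (g ^ n) ^ (q + 1) = Units.mk0 k hk := by
      rw [← hm, ← zpow_natCast, ← _root_.zpow_mul]; congr 1; push_cast; ring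
    simpa using congrArg (Units.val) this
  have hc := hprim.card_nthRoots k
  rw [if_pos hex] at hc
  have hnd : (Polynomial.nthRoots (q + 1) k).Nodup := hprim.nthRoots_nodup hk
  refine Eq.trans ?_ hc
  rw [← Multiset.toFinset_card_of_nodup hnd]
  congr 1
  ext y
  simp [Polynomial.mem_nthRoots]

/-- The hypotheses on `q` and `F` in the form used for computations: `F` has characteristic two
and `x ↦ x ^ q` is an additive involution. -/
structure QuadData (q : ℕ) (F : Type*) [Field F] : Prop where
  two_eq : (2 : F) = 0
  two_le : 2 ≤ q
  add_pow : ∀ x y : F, (x + y) ^ q = x ^ q + y ^ q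
  pow_pow : ∀ x : F, (x ^ q) ^ q = x

lemma QuadData.one_add_norm {q : ℕ} {F : Type*} [Field F] (H : QuadData q F) (y : F) :
    (1 + y ^ (q + 1)) ^ q = 1 + y ^ (q + 1) := by
  rw [H.add_pow, one_pow, pow_succ, mul_pow, H.pow_pow]; ring

/-- The affine points of the Hermitian curve, as vectors `(x, y)`. -/
def affPts (q : ℕ) (F : Type*) [Field F] : Set (F × F) := {v | v.1 ^ (q + 1) - v.2 ^ (q + 1) = 1}

/-- The affine points fixed by the upper left `2 × 2` block of `M`. -/
def fixAff (q : ℕ) {F : Type*} [Field F] (M : Matrix (Fin 3) (Fin 3) F) : Set (F × F) :=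
  {v | v ∈ affPts q F ∧ M 0 0 * v.1 + M 0 1 * v.2 = v.1 ∧ M 1 0 * v.1 + M 1 1 * v.2 = v.2}

/-- The points `(t : 1 : 0)` at infinity on the Hermitian curve which are fixed by the upper left
block of `M`, acting as a Möbius transformation. -/
def fixInf (q : ℕ) {F : Type*} [Field F] (M : Matrix (Fin 3) (Fin 3) F) : Set F :=
  {t | t ^ (q + 1) = 1 ∧ M 0 0 * t + M 0 1 = t * (M 1 0 * t + M 1 1)}

lemma ncard_norm_fibre {F : Type*} [Field F] [Fintype F] {q : ℕ} (hq : 2 ≤ q)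
    (hF : Fintype.card F = q ^ 2) {k : F} (hk : k ≠ 0) (hkq : k ^ q = k) :
    {y : F | y ^ (q + 1) = k}.ncard = q + 1 := by
  classical
  refine Eq.trans ?_ (card_norm_fibre hq hF hk hkq)
  rw [← Set.ncard_coe_finset]
  congr 1; ext; simp

lemma card_affPts {F : Type*} [Field F] [Fintype F] {q : ℕ} (H : QuadData q F)
    (hF : Fintype.card F = q ^ 2) : (affPts q F).ncard + q = q ^ 3 := by
  classical
  have h1 : (affPts q F).ncard =
      ∑ y : F, (Finset.univ.filter (fun x : F => x ^ (q + 1) = 1 + y ^ (q + 1))).card := by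
    rw [← Finset.card_sigma, ← Set.ncard_coe_finset]
    refine Set.ncard_congr (fun v _ => (⟨v.2, v.1⟩ : (_ : F) × F)) ?_ ?_ ?_
    · rintro ⟨x, y⟩ hv
      simp only [affPts, Set.mem_ofPred_eq] at hv
      simp [← hv]
    · rintro ⟨x, y⟩ ⟨x', y'⟩ _ _ h
      simp only [Sigma.mk.injEq, heq_eq_eq] at h
      simp [h]
    · rintro ⟨y, x⟩ hv
      simp only [Finset.coe_sigma, Set.mem_sigma_iff, Finset.coe_univ, Finset.coe_filter,
        Finset.mem_univ, true_and, Set.mem_ofPred_eq, Set.mem_univ] at hv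
      exact ⟨(x, y), by simp [affPts, hv], rfl⟩
  have h2 : ∀ y : F, (Finset.univ.filter (fun x : F => x ^ (q + 1) = 1 + y ^ (q + 1))).card =
      if y ^ (q + 1) = 1 then 1 else q + 1 := by
    intro y
    have h2 := H.two_eq
    split_ifs with hy
    · rw [hy, Finset.card_eq_one]
      refine ⟨0, ?_⟩
      ext x
      simp only [Finset.mem_filter, Finset.mem_univ, true_and, Finset.mem_singleton]
      rw [one_add_one_eq_two, h2]
      simp
    · apply card_norm_fibre H.two_le hF
      · intro h0; apply hy; linear_combination h0 - h2
      · exact H.one_add_norm y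
  have h3 : (Finset.univ.filter (fun y : F => y ^ (q + 1) = 1)).card = q + 1 :=
    card_norm_fibre H.two_le hF one_ne_zero (one_pow q)
  have h4 : (Finset.univ.filter (fun y : F => ¬ y ^ (q + 1) = 1)).card + (q + 1) = q ^ 2 := by
    have h5 := Finset.card_filter_add_card_filter_not (s := Finset.univ)
      (fun y : F => y ^ (q + 1) = 1)
    rw [h3, Finset.card_univ, hF] at h5
    omega
  rw [h1, Finset.sum_congr rfl (fun y _ => h2 y), Finset.sum_ite]
  simp only [Finset.sum_const, smul_eq_mul, mul_one, h3]
  zify at h4 ⊢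
  linear_combination ((q : ℤ) + 1) * h4

/-! ### Fixed points of the elements of the group -/

/-- The matrix `[a, c, τ]`. -/
def mlMat (q : ℕ) {F : Type*} [Field F] (a c τ : F) : Matrix (Fin 3) (Fin 3) F :=
  !![a, τ * c ^ q, 0; c, τ * a ^ q, 0; 0, 0, 1]

lemma fixAff_one {F : Type*} [Field F] {q : ℕ} :
    fixAff q (1 : Matrix (Fin 3) (Fin 3) F) = affPts q F := by
  ext v; simp [fixAff]

lemma eq_zero_of_mul_eq_self {F : Type*} [Field F] {ε x : F} (hε : ε ≠ 1) (hx : ε * x = x) :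
    x = 0 := by
  by_contra h
  exact hε (mul_right_cancel₀ h (hx.trans (one_mul x).symm))

lemma fixAff_scalar {F : Type*} [Field F] {q : ℕ} {ε : F} (hε : ε ≠ 1) :
    fixAff q (Matrix.diagonal ![ε, ε, 1]) = ∅ := by
  ext ⟨x, y⟩
  simp only [fixAff, affPts, Set.mem_ofPred_eq, Set.mem_empty_iff_false, iff_false]
  rintro ⟨h, hx, hy⟩
  simp only [Matrix.diagonal, Matrix.of_apply] at hx hy
  have hx0 : x = 0 := eq_zero_of_mul_eq_self hε (by simpa using hx)
  have hy0 : y = 0 := eq_zero_of_mul_eq_self hε (by simpa using hy)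
  simp [hx0, hy0] at h

lemma fixInf_scalar {F : Type*} [Field F] [Fintype F] {q : ℕ} (hq : 2 ≤ q)
    (hF : Fintype.card F = q ^ 2) (ε : F) :
    (fixInf q (Matrix.diagonal ![ε, ε, 1])).ncard = q + 1 := by
  rw [← ncard_norm_fibre hq hF one_ne_zero (one_pow q)]
  congr 1; ext t
  simp [fixInf, Matrix.diagonal, mul_comm]

/-- A nonscalar element of trace zero has a single eigenvector, and this vector is isotropic. -/
lemma fixAff_involution {F : Type*} [Field F] {q : ℕ} (H : QuadData q F) {a c τ : F}
    (hac : a ^ (q + 1) - c ^ (q + 1) = 1) (hT : a + τ * a ^ q = 0) (hc : c ≠ 0) :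
    fixAff q (mlMat q a c τ) = ∅ := by
  have h2 := H.two_eq
  ext ⟨x, y⟩
  simp only [fixAff, affPts, mlMat, Set.mem_ofPred_eq, Set.mem_empty_iff_false, iff_false]
  rintro ⟨h, hx, hy⟩
  simp at hx hy
  have e1 : c * x = (a + 1) * y := by grind
  have e2 : c ^ q * x ^ q = (a ^ q + 1) * y ^ q := by
    have := congrArg (· ^ q) e1
    simpa [mul_pow, H.add_pow] using this
  have e3 : c * c ^ q = a * a ^ q - 1 := by rw [pow_succ, pow_succ] at hac; linear_combination -hac
  have hy0 : y ≠ 0 := by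
    rintro rfl
    simp [hc] at e1
    subst e1
    simp at h
  have e4 : τ = 1 := by
    have : (τ - 1) * y = 0 := by
      grind
    simpa [sub_eq_zero, hy0] using this
  have e5 : a ^ q = a := by rw [e4] at hT; linear_combination hT - a * h2
  have e6 : (c * c ^ q) * (x ^ (q + 1) - y ^ (q + 1)) = 0 := by
    rw [e5] at e2 e3
    rw [pow_succ, pow_succ]
    linear_combination c * x * e2 + (a + 1) * y ^ q * e1 - y * y ^ q * e3 + y * y ^ q * (a + 1) * h2
  rw [h] at e6
  simp [hc] at e6

lemma fixInf_involution {F : Type*} [Field F] [Finite F] {q : ℕ} (H : QuadData q F) {a c τ : F}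
    (hτ : τ ^ (q + 1) = 1) (hT : a + τ * a ^ q = 0) (hc : c ≠ 0) :
    (fixInf q (mlMat q a c τ)).ncard = 1 := by
  have h2 := H.two_eq
  have : CharP F 2 := CharTwo.of_one_ne_zero_of_two_eq_zero one_ne_zero h2
  have hsq : ∀ {x y : F}, x ^ 2 = y ^ 2 → x = y := fun h => CharTwo.sq_injective h
  obtain ⟨t, ht⟩ : ∃ t : F, t ^ 2 = τ * c ^ q * c⁻¹ :=
    (Finite.injective_iff_surjective.mp (fun x y h => hsq h : Function.Injective (· ^ 2 : F → F))) _
  have ht' : c * t ^ 2 = τ * c ^ q := by rw [ht]; field_simp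
  rw [Set.ncard_eq_one]
  refine ⟨t, ?_⟩
  ext s
  simp only [fixInf, mlMat, Set.mem_ofPred_eq, Set.mem_singleton_iff]
  simp
  constructor
  · rintro ⟨-, hs⟩
    apply hsq
    apply mul_left_cancel₀ hc
    linear_combination - hs - ht' + s * a * h2 - s * hT
  · rintro rfl
    refine ⟨?_, ?_⟩
    · apply hsq
      have hcq : c ^ q ≠ 0 := pow_ne_zero _ hc
      rw [← pow_mul, mul_comm (q + 1), pow_mul, ht, mul_pow, mul_pow, hτ, inv_pow, pow_succ,
        pow_succ, H.pow_pow]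
      field_simp
    · linear_combination - ht' - s * hT + s * a * h2

/-- If `T² = det ≠ 0` for the trace `T`, the eigenvalues are `ωT, ω²T`, while an isotropic
eigenvector would force the eigenvalue `T`. -/
lemma fixInf_three {F : Type*} [Field F] {q : ℕ} (H : QuadData q F) (h3 : 3 ∣ q + 1) {a c τ : F}
    (hac : a ^ (q + 1) - c ^ (q + 1) = 1) (hτ : τ ^ (q + 1) = 1)
    (hT : (a + τ * a ^ q) ^ 2 = τ) :
    fixInf q (mlMat q a c τ) = ∅ := by
  have h2 := H.two_eq
  have : CharP F 2 := CharTwo.of_one_ne_zero_of_two_eq_zero one_ne_zero h2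
  have hsq : ∀ {x y : F}, x ^ 2 = y ^ 2 → x = y := fun h => CharTwo.sq_injective h
  ext t
  simp only [fixInf, mlMat, Set.mem_ofPred_eq, Set.mem_empty_iff_false, iff_false]
  simp
  intro ht hs
  obtain ⟨T, hTd⟩ : ∃ T, T = a + τ * a ^ q := ⟨_, rfl⟩
  obtain ⟨m, hm⟩ : ∃ m, m = c * t + τ * a ^ q := ⟨_, rfl⟩
  have hτ0 : τ ≠ 0 := by rintro rfl; simp at hτ
  rw [← hTd] at hT
  have hT0 : T ≠ 0 := by rintro rfl; simp at hT; exact hτ0 hT.symm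
  have ht0 : t ≠ 0 := by rintro rfl; simp at ht
  have hTn : T ^ (q + 1) = 1 := by
    have : T ^ q * τ = T := by
      rw [hTd, H.add_pow, mul_pow, H.pow_pow]; rw [pow_succ] at hτ
      linear_combination a * hτ
    have h' : T * (T ^ (q + 1) - 1) = 0 := by
      rw [pow_succ]; linear_combination this + T ^ q * hT
    simpa [sub_eq_zero, hT0] using h'
  have hmm : m ^ 2 + T * m + T ^ 2 = 0 := by
    rw [pow_succ] at hac
    have e : c * (m * t) = c * (a * t + τ * c ^ q) := by rw [hm]; linear_combination - c * hs
    rw [pow_succ] at hac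
    grind
  have hmn : m ^ (q + 1) = 1 := by
    obtain ⟨k, hk⟩ := h3
    have : m ^ 3 = T ^ 3 := by linear_combination (m - T) * hmm
    rw [hk, pow_mul, this, ← pow_mul, ← hk, hTn]
  have hmt : m ^ q * τ = m := by
    have e1 : m ^ q = c ^ q * t ^ q + τ ^ q * a := by
      rw [hm, H.add_pow, mul_pow, mul_pow, H.pow_pow]
    apply mul_right_cancel₀ ht0
    rw [pow_succ] at hτ ht
    rw [e1]
    linear_combination τ * c ^ q * ht + a * t * hτ + hs - t * hm
  have : m = T := by
    apply hsq
    rw [hT, pow_two]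
    rw [pow_succ] at hmn
    linear_combination τ * hmn - m * hmt
  rw [this] at hmm
  apply pow_ne_zero 2 hT0
  linear_combination hmm - T ^ 2 * h2

lemma fixAff_three_empty {F : Type*} [Field F] {q : ℕ} {a c τ : F}
    (hac : a ^ (q + 1) - c ^ (q + 1) = 1)
    (hT : (a + τ * a ^ q) ^ 2 = τ)
    (hne : 1 + (a + τ * a ^ q) + (a + τ * a ^ q) ^ 2 ≠ 0) (H : QuadData q F) :
    fixAff q (mlMat q a c τ) = ∅ := by
  have h2 := H.two_eq
  ext ⟨x, y⟩
  simp only [fixAff, affPts, mlMat, Set.mem_ofPred_eq, Set.mem_empty_iff_false, iff_false]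
  rintro ⟨h, hx, hy⟩
  simp at hx hy
  rw [pow_succ, pow_succ] at hac
  -- the characteristic polynomial at `1` annihilates every fixed vector
  have e1 : (1 + (a + τ * a ^ q) + (a + τ * a ^ q) ^ 2) * x = 0 := by
    rw [hT]; grind
  have e2 : (1 + (a + τ * a ^ q) + (a + τ * a ^ q) ^ 2) * y = 0 := by
    rw [hT]; grind
  simp [hne] at e1 e2
  simp [e1, e2] at h

/-- An element with eigenvalues `ωT, ω²T`, one of which is `1`, has a nonisotropic line of fixed
vectors. -/
lemma fixAff_three {F : Type*} [Field F] [Fintype F] {q : ℕ} (H : QuadData q F)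
    (hF : Fintype.card F = q ^ 2) {a c τ : F}
    (hac : a ^ (q + 1) - c ^ (q + 1) = 1) (hτ : τ ^ (q + 1) = 1)
    (hT : (a + τ * a ^ q) ^ 2 = τ)
    (h0 : 1 + (a + τ * a ^ q) + (a + τ * a ^ q) ^ 2 = 0) :
    (fixAff q (mlMat q a c τ)).ncard = q + 1 := by
  have h2 := H.two_eq
  obtain ⟨T, hTd⟩ : ∃ T, T = a + τ * a ^ q := ⟨_, rfl⟩
  rw [← hTd] at hT h0
  rw [pow_succ, pow_succ] at hac
  rw [pow_succ] at hτ
  by_cases hc : c = 0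
  · subst hc
    have hq0 : (0 : F) ^ q = 0 := zero_pow (by have := H.two_le; omega)
    rw [hq0] at hac
    -- one of the two diagonal entries is `1`, the other is not
    have hprod : (a - 1) * (τ * a ^ q - 1) = 0 := by grind
    have hτ1 : τ ≠ 1 := by rintro rfl; grind
    rcases mul_eq_zero.mp hprod with h | h
    · have ha : a = 1 := by linear_combination h
      subst ha
      rw [← ncard_norm_fibre H.two_le hF one_ne_zero (one_pow q)]
      refine Set.ncard_congr (fun v _ => v.1) ?_ ?_ ?_
      · rintro ⟨x, y⟩ ⟨h, hx, hy⟩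
        simp [mlMat] at hx hy
        have : y = 0 := eq_zero_of_mul_eq_self hτ1 hy
        simpa [affPts, this] using h
      · rintro ⟨x, y⟩ ⟨x', y'⟩ ⟨h, hx, hy⟩ ⟨h', hx', hy'⟩ e
        simp [mlMat] at hy hy' e
        simp [eq_zero_of_mul_eq_self hτ1 hy, eq_zero_of_mul_eq_self hτ1 hy', e]
      · rintro x hx
        refine ⟨(x, 0), ⟨?_, ?_, ?_⟩, rfl⟩
        · simpa [affPts] using hx
        · simp [mlMat]
        · simp [mlMat]
    · have hd : τ * a ^ q = 1 := by linear_combination h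
      have ha : a ≠ 1 := by rintro rfl; simp [hτ1] at hd
      rw [← ncard_norm_fibre H.two_le hF one_ne_zero (one_pow q)]
      refine Set.ncard_congr (fun v _ => v.2) ?_ ?_ ?_
      · rintro ⟨x, y⟩ ⟨h, hx, hy⟩
        simp [mlMat, hq0] at hx
        simp [affPts, eq_zero_of_mul_eq_self ha hx] at h
        change y ^ (q + 1) = 1
        grind
      · rintro ⟨x, y⟩ ⟨x', y'⟩ ⟨h, hx, hy⟩ ⟨h', hx', hy'⟩ e
        simp [mlMat, hq0] at hx hx' e
        simp [eq_zero_of_mul_eq_self ha hx, eq_zero_of_mul_eq_self ha hx', e]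
      · rintro x hx
        refine ⟨(0, x), ⟨?_, ?_, ?_⟩, rfl⟩
        · simp only [Set.mem_ofPred_eq] at hx
          simp [affPts, hx]
          linear_combination - h2
        · simp [mlMat, hq0]
        · simp [mlMat, hd]
  · have hcq : c ^ q ≠ 0 := pow_ne_zero _ hc
    -- `κ / c ^ (q + 1)` is the value of the form on the fixed vector with second coordinate `1`
    obtain ⟨κ, hκ⟩ : ∃ κ, κ = τ * a ^ q + τ ^ q * a := ⟨_, rfl⟩
    have hκ0 : κ ≠ 0 := by
      rintro rfl
      have hcc : c * c ^ q = 0 := by grind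
      simp [hc, hcq] at hcc
    have hκq : κ ^ q = κ := by
      rw [hκ, H.add_pow, mul_pow, mul_pow, H.pow_pow, H.pow_pow]; ring
    have hk0 : c * c ^ q / κ ≠ 0 := by positivity
    have hkq : (c * c ^ q / κ) ^ q = c * c ^ q / κ := by
      rw [div_pow, mul_pow, H.pow_pow, hκq, mul_comm]
    rw [← ncard_norm_fibre H.two_le hF hk0 hkq]
    have key : ∀ x y : F, c * x + τ * a ^ q * y = y →
        c * c ^ q * (x ^ (q + 1) - y ^ (q + 1)) = κ * y ^ (q + 1) := by
      intro x y hy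
      have e1 : c * x = (1 + τ * a ^ q) * y := by
        linear_combination hy - τ * a ^ q * y * h2
      have e2 : c ^ q * x ^ q = (1 + τ ^ q * a) * y ^ q := by
        have := congrArg (· ^ q) e1
        simpa [mul_pow, H.add_pow, H.pow_pow] using this
      rw [pow_succ, pow_succ]
      grind
    refine Set.ncard_congr (fun v _ => v.2) ?_ ?_ ?_
    · rintro ⟨x, y⟩ ⟨h, hx, hy⟩
      simp [mlMat] at hx hy
      have := key x y hy
      simp only [affPts, Set.mem_ofPred_eq] at h
      rw [h] at this
      change y ^ (q + 1) = _
      field_simp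
      linear_combination - this
    · rintro ⟨x, y⟩ ⟨x', y'⟩ ⟨h, hx, hy⟩ ⟨h', hx', hy'⟩ e
      simp [mlMat] at hy hy' e
      subst e
      have : c * x = c * x' := by linear_combination hy - hy'
      simp [mul_left_cancel₀ hc this]
    · intro y hy
      simp only [Set.mem_ofPred_eq] at hy
      have hy1 : c * ((1 - τ * a ^ q) * y / c) + τ * a ^ q * y = y := by field_simp; ring
      obtain ⟨x, hx⟩ : ∃ x, x = (1 - τ * a ^ q) * y / c := ⟨_, rfl⟩
      rw [← hx] at hy1
      refine ⟨(x, y), ⟨?_, ?_, ?_⟩, rfl⟩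
      · have := key _ _ hy1
        rw [hy] at this
        have hcc : c * c ^ q ≠ 0 := mul_ne_zero hc hcq
        apply mul_left_cancel₀ hcc
        change c * c ^ q * (x ^ (q + 1) - y ^ (q + 1)) = _
        rw [hy, this]; field_simp
      · simp [mlMat]
        apply mul_left_cancel₀ hc
        grind
      · simpa [mlMat] using hy1

/-! ### The action on the projective plane -/

lemma glAct_mk {F : Type*} [Field F] (M : GL (Fin 3) F) (v : Fin 3 → F) (hv : v ≠ 0)
    (hw : (M : Matrix (Fin 3) (Fin 3) F) *ᵥ v ≠ 0) :
    glAct M (Projectivization.mk F v hv) =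
      Projectivization.mk F ((M : Matrix (Fin 3) (Fin 3) F) *ᵥ v) hw := by
  rfl

lemma gl_mulVec_ne_zero {F : Type*} [Field F] (M : GL (Fin 3) F) {v : Fin 3 → F} (hv : v ≠ 0) :
    (M : Matrix (Fin 3) (Fin 3) F) *ᵥ v ≠ 0 := by
  intro h
  apply hv
  have := congrArg (fun u => ((M⁻¹ : GL (Fin 3) F) : Matrix (Fin 3) (Fin 3) F) *ᵥ u) h
  simpa [Matrix.mulVec_mulVec, ← Units.val_mul] using this

lemma glAct_one {F : Type*} [Field F] (x : Projectivization F (Fin 3 → F)) :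
    glAct (1 : GL (Fin 3) F) x = x := by
  induction x using Projectivization.ind with
  | h v hv =>
    rw [glAct_mk _ _ _ (gl_mulVec_ne_zero _ hv)]
    congr 1; simp

lemma glAct_mul {F : Type*} [Field F] (M N : GL (Fin 3) F)
    (x : Projectivization F (Fin 3 → F)) : glAct (M * N) x = glAct M (glAct N x) := by
  induction x using Projectivization.ind with
  | h v hv =>
    have h1 := gl_mulVec_ne_zero N hv
    rw [glAct_mk _ _ _ (gl_mulVec_ne_zero _ hv), glAct_mk N _ _ h1,
      glAct_mk M _ _ (gl_mulVec_ne_zero M h1)]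
    congr 1; simp [Matrix.mulVec_mulVec]

lemma mk_mem_hermitianPts {F : Type*} [Field F] {q : ℕ} (v : Fin 3 → F) (hv : v ≠ 0) :
    Projectivization.mk F v hv ∈ hermitianPts q F ↔
      v 1 ^ (q + 1) = v 0 ^ (q + 1) - v 2 ^ (q + 1) := by
  obtain ⟨u, hu⟩ := Projectivization.exists_smul_eq_mk_rep F v hv
  have hu0 : (u : F) ^ (q + 1) ≠ 0 := pow_ne_zero _ u.ne_zero
  simp only [hermitianPts, Set.mem_ofPred_eq, ← hu, Pi.smul_apply, Units.smul_def, smul_eq_mul,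
    mul_pow, ← mul_sub]
  exact mul_right_inj' hu0

lemma glAct_mem_hermitianPts {F : Type*} [Field F] {q : ℕ} (H : QuadData q F) {M : GL (Fin 3) F}
    (hM : M ∈ MlSet q F) {x : Projectivization F (Fin 3 → F)} (hx : x ∈ hermitianPts q F) :
    glAct M x ∈ hermitianPts q F := by
  obtain ⟨a, c, τ, hac, hτ, hM⟩ := hM
  induction x using Projectivization.ind with
  | h v hv =>
    rw [mk_mem_hermitianPts] at hx
    rw [glAct_mk _ _ _ (gl_mulVec_ne_zero _ hv), mk_mem_hermitianPts, hM]
    simp only [Matrix.mulVec, dotProduct, Fin.sum_univ_three]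
    simp
    simp only [pow_succ _ q, H.add_pow, mul_pow, H.pow_pow] at hac hτ hx ⊢
    generalize a ^ q = a' at *
    generalize c ^ q = c' at *
    generalize τ ^ q = τ' at *
    linear_combination (v 1 ^ q * v 1 * (τ' * τ) - v 0 ^ q * v 0) * hac + v 1 ^ q * v 1 * hτ + hx

/-- Burnside's lemma for the orbits counted by `numOrbits`. -/
lemma burnside {F : Type*} [Field F] [Fintype F] (L : Subgroup (GL (Fin 3) F)) [Fintype L]
    (O : Set (Projectivization F (Fin 3 → F)))
    (hO : ∀ g ∈ L, ∀ x ∈ O, glAct g x ∈ O) :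
    ∑ g : L, {x | x ∈ O ∧ glAct (g : GL (Fin 3) F) x = x}.ncard
      = numOrbits L O * Fintype.card L := by
  classical
  let act : MulAction L O :=
    { smul := fun g x => ⟨glAct (g : GL (Fin 3) F) x, hO g g.2 x x.2⟩
      one_smul := fun x => Subtype.ext (glAct_one _)
      mul_smul := fun g k x => Subtype.ext (glAct_mul _ _ _) }
  have hsmul : ∀ (g : L) (x : O), ((g • x : O) : Projectivization F (Fin 3 → F))
      = glAct (g : GL (Fin 3) F) x := fun _ _ => rfl
  have hfin : Finite (Projectivization F (Fin 3 → F)) := inferInstance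
  let : Fintype (MulAction.orbitRel.Quotient L O) := Fintype.ofFinite _
  let : ∀ g : L, Fintype (MulAction.fixedBy O g) := fun g => Fintype.ofFinite _
  have hB := MulAction.sum_card_fixedBy_eq_card_orbits_mul_card_group L O
  have horb : numOrbits L O = Fintype.card (MulAction.orbitRel.Quotient L O) := by
    rw [← Nat.card_eq_fintype_card, numOrbits]
    symm
    let f : MulAction.orbitRel.Quotient L O → Set (Projectivization F (Fin 3 → F)) :=
      fun z => Subtype.val '' z.orbit
    have hf : ∀ x : O, f (Quotient.mk'' x) = {y | ∃ g ∈ L, glAct g x = y} := by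
      intro x
      ext y
      simp only [f, MulAction.orbitRel.Quotient.orbit_mk, Set.mem_image, MulAction.mem_orbit_iff,
        Set.mem_ofPred_eq]
      constructor
      · rintro ⟨_, ⟨g, rfl⟩, rfl⟩
        exact ⟨g, g.2, rfl⟩
      · rintro ⟨g, hg, rfl⟩
        exact ⟨_, ⟨⟨g, hg⟩, rfl⟩, rfl⟩
    have hinj : Function.Injective f := by
      intro z z' h
      exact MulAction.orbitRel.Quotient.orbit_injective
        (Set.image_injective.mpr Subtype.val_injective h)
    rw [Nat.card_congr (Equiv.ofInjective f hinj)]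
    congr 2
    ext S
    constructor
    · rintro ⟨z, rfl⟩
      induction z using Quotient.inductionOn' with
      | h x => exact ⟨x, x.2, (hf x).symm⟩
    · rintro ⟨x, hx, rfl⟩
      exact ⟨Quotient.mk'' ⟨x, hx⟩, hf ⟨x, hx⟩⟩
  rw [horb]
  refine Eq.trans (Finset.sum_congr rfl fun g _ => ?_) hB
  rw [← Nat.card_eq_fintype_card, Nat.card_coe_set_eq,
    ← Set.ncard_image_of_injective _ Subtype.val_injective]
  congr 1
  ext x
  simp only [Set.mem_ofPred_eq, Set.mem_image, MulAction.mem_fixedBy]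
  constructor
  · rintro ⟨hx, hg⟩
    exact ⟨⟨x, hx⟩, Subtype.ext hg, rfl⟩
  · rintro ⟨y, hy, rfl⟩
    exact ⟨y.2, congrArg Subtype.val hy⟩

/-- The fixed points on the curve split into affine points and points at infinity. -/
lemma ncard_fixed {F : Type*} [Field F] [Fintype F] {q : ℕ} {M : GL (Fin 3) F}
    (hM : M ∈ MlSet q F) :
    {x | x ∈ hermitianPts q F ∧ glAct M x = x}.ncard
      = (fixAff q (M : Matrix (Fin 3) (Fin 3) F)).ncard
        + (fixInf q (M : Matrix (Fin 3) (Fin 3) F)).ncard := by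
  obtain ⟨a, c, τ, -, -, hM⟩ := hM
  have hne1 : ∀ v : F × F, ![v.1, v.2, 1] ≠ (0 : Fin 3 → F) := fun v h => by
    simpa using congrFun h 2
  have hne2 : ∀ t : F, ![t, 1, 0] ≠ (0 : Fin 3 → F) := fun v h => by
    simpa using congrFun h 1
  let f1 : F × F → Projectivization F (Fin 3 → F) := fun v => Projectivization.mk F _ (hne1 v)
  let f2 : F → Projectivization F (Fin 3 → F) := fun t => Projectivization.mk F _ (hne2 t)
  have hf1 : Function.Injective f1 := by
    intro v v' h
    obtain ⟨u, hu⟩ := (Projectivization.mk_eq_mk_iff' F _ _ _ _).mp h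
    have e0 := congrFun hu 0
    have e1 := congrFun hu 1
    have e2 := congrFun hu 2
    simp at e0 e1 e2
    subst e2
    ext <;> simp_all
  have hf2 : Function.Injective f2 := by
    intro v v' h
    obtain ⟨u, hu⟩ := (Projectivization.mk_eq_mk_iff' F _ _ _ _).mp h
    have e0 := congrFun hu 0
    have e1 := congrFun hu 1
    simp at e0 e1
    subst e1
    simp_all
  rw [← Set.ncard_image_of_injective _ hf1, ← Set.ncard_image_of_injective _ hf2,
    ← Set.ncard_union_eq]
  · congr 1
    have hfix1 : ∀ v, glAct M (f1 v) = f1 v ↔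
        (M : Matrix (Fin 3) (Fin 3) F) 0 0 * v.1 + (M : Matrix (Fin 3) (Fin 3) F) 0 1 * v.2 = v.1 ∧
        (M : Matrix (Fin 3) (Fin 3) F) 1 0 * v.1 + (M : Matrix (Fin 3) (Fin 3) F) 1 1 * v.2
          = v.2 := by
      intro v
      rw [glAct_mk _ _ _ (gl_mulVec_ne_zero _ (hne1 v)), Projectivization.mk_eq_mk_iff', hM]
      simp only [funext_iff, Fin.forall_fin_succ, Matrix.mulVec, dotProduct, Fin.sum_univ_three]
      simp
      constructor
      · rintro ⟨h0, h1⟩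
        exact ⟨h0.symm, h1.symm⟩
      · rintro ⟨h0, h1⟩
        exact ⟨h0.symm, h1.symm⟩
    have hfix2 : ∀ t, glAct M (f2 t) = f2 t ↔
        (M : Matrix (Fin 3) (Fin 3) F) 0 0 * t + (M : Matrix (Fin 3) (Fin 3) F) 0 1 =
          t * ((M : Matrix (Fin 3) (Fin 3) F) 1 0 * t + (M : Matrix (Fin 3) (Fin 3) F) 1 1) := by
      intro t
      rw [glAct_mk _ _ _ (gl_mulVec_ne_zero _ (hne2 t)), Projectivization.mk_eq_mk_iff', hM]
      simp only [funext_iff, Fin.forall_fin_succ, Matrix.mulVec, dotProduct, Fin.sum_univ_three]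
      simp [mul_comm, eq_comm]
    ext x
    simp only [Set.mem_ofPred_eq, Set.mem_union, Set.mem_image]
    constructor
    · rintro ⟨hx, hg⟩
      induction x using Projectivization.ind with
      | h v hv =>
      have hx' := (mk_mem_hermitianPts v hv).mp hx
      by_cases h2 : v 2 = 0
      · right
        have h1 : v 1 ≠ 0 := by
          intro h1
          apply hv
          simp [h1, h2] at hx'
          have h0 := hx'.symm
          rw [pow_eq_zero_iff (by omega)] at h0
          ext i; fin_cases i <;> simp [h0, h1, h2]
        have he : Projectivization.mk F v hv = f2 (v 0 / v 1) := by
          rw [Projectivization.mk_eq_mk_iff']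
          refine ⟨v 1, ?_⟩
          ext i; fin_cases i <;> simp [h2]
          field_simp
        refine ⟨v 0 / v 1, ⟨?_, ?_⟩, he.symm⟩
        · rw [he, mk_mem_hermitianPts] at hx
          simpa using hx.symm
        · rw [he] at hg
          exact (hfix2 _).mp hg
      · left
        have he : Projectivization.mk F v hv = f1 (v 0 / v 2, v 1 / v 2) := by
          rw [Projectivization.mk_eq_mk_iff']
          refine ⟨v 2, ?_⟩
          ext i; fin_cases i <;> simp <;> field_simp
        refine ⟨(v 0 / v 2, v 1 / v 2), ⟨?_, ?_⟩, he.symm⟩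
        · rw [he, mk_mem_hermitianPts] at hx
          simp only [affPts, Set.mem_ofPred_eq]
          simp at hx ⊢
          rw [hx]; ring
        · rw [he] at hg
          exact (hfix1 _).mp hg
    · rintro (⟨v, ⟨hv, hg⟩, rfl⟩ | ⟨t, ⟨ht, hg⟩, rfl⟩)
      · refine ⟨?_, (hfix1 v).mpr hg⟩
        rw [mk_mem_hermitianPts]
        simp only [affPts, Set.mem_ofPred_eq] at hv
        simp
        linear_combination -hv
      · refine ⟨?_, (hfix2 t).mpr hg⟩
        rw [mk_mem_hermitianPts]
        simp [ht]
  · rw [Set.disjoint_left]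
    rintro _ ⟨v, -, rfl⟩ ⟨t, -, h⟩
    obtain ⟨u, hu⟩ := (Projectivization.mk_eq_mk_iff' F _ _ _ _).mp h
    have e2 := congrFun hu 2
    have e1 := congrFun hu 1
    simp at e2 e1
    simp [e2] at e1

/-! ### Elements over involutions and over 3-cycles -/

/-- The trace of the upper left `2 × 2` block. -/
def blockTrace {F : Type*} [Field F] (g : GL (Fin 3) F) : F :=
  (g : Matrix (Fin 3) (Fin 3) F) 0 0 + (g : Matrix (Fin 3) (Fin 3) F) 1 1

lemma mem_ZSet_of_scalar {F : Type*} [Field F] {q : ℕ} (H : QuadData q F) {g : GL (Fin 3) F}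
    {a c τ : F} (hac : a ^ (q + 1) - c ^ (q + 1) = 1)
    (hg : (g : Matrix (Fin 3) (Fin 3) F) = mlMat q a c τ) (hc : c = 0) (ha : a = τ * a ^ q) :
    g ∈ ZSet q F := by
  have hq := H.two_le
  subst hc
  refine ⟨a, by simpa using hac, ?_⟩
  rw [hg]
  ext i j
  fin_cases i <;> fin_cases j <;>
    simp [mlMat, ← ha, Matrix.diagonal, show q ≠ 0 by omega]

lemma involution_data {F : Type*} [Field F] {q : ℕ} (H : QuadData q F) {g : GL (Fin 3) F}
    {a c τ : F} (hac : a ^ (q + 1) - c ^ (q + 1) = 1)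
    (hg : (g : Matrix (Fin 3) (Fin 3) F) = mlMat q a c τ) (hgZ : g ∉ ZSet q F)
    (hg2 : g ^ 2 ∈ ZSet q F) : a + τ * a ^ q = 0 ∧ c ≠ 0 := by
  have h2 := H.two_eq
  obtain ⟨ε, -, hε⟩ := hg2
  rw [Units.val_pow_eq_pow_val, hg, pow_two] at hε
  have e0 := congrFun (congrFun hε 0) 0
  have e1 := congrFun (congrFun hε 1) 1
  simp [mlMat, Matrix.mul_apply, Fin.sum_univ_three] at e0 e1
  have hT : a + τ * a ^ q = 0 := by
    have : (a + τ * a ^ q) ^ 2 = 0 := by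
      linear_combination e0 - e1 + (a * τ * a ^ q + τ ^ 2 * (a ^ q) ^ 2) * h2
    simpa using this
  refine ⟨hT, fun hc => hgZ (mem_ZSet_of_scalar H hac hg hc ?_)⟩
  linear_combination -hT + a * h2

/-- By Cayley–Hamilton `g³ = (T² - det) g - T det` on the `2 × 2` block, so a nonscalar `g` with
scalar cube satisfies `T² = det`. -/
lemma three_data {F : Type*} [Field F] {q : ℕ} (H : QuadData q F) {g : GL (Fin 3) F}
    {a c τ ε : F} (hac : a ^ (q + 1) - c ^ (q + 1) = 1)
    (hg : (g : Matrix (Fin 3) (Fin 3) F) = mlMat q a c τ) (hgZ : g ∉ ZSet q F)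
    (hε : ((g ^ 3 : GL (Fin 3) F) : Matrix (Fin 3) (Fin 3) F) = Matrix.diagonal ![ε, ε, 1]) :
    (a + τ * a ^ q) ^ 2 = τ ∧ ε = (a + τ * a ^ q) ^ 3 := by
  have h2 := H.two_eq
  rw [Units.val_pow_eq_pow_val, hg, pow_succ, pow_two] at hε
  have e0 := congrFun (congrFun hε 0) 0
  have e1 := congrFun (congrFun hε 1) 1
  have e2 := congrFun (congrFun hε 1) 0
  simp [mlMat, Matrix.mul_apply, Fin.sum_univ_three] at e0 e1 e2
  simp only [pow_succ _ q] at hac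
  have hT : (a + τ * a ^ q) ^ 2 = τ := by
    by_contra hne
    have hne' : (a + τ * a ^ q) ^ 2 - τ ≠ 0 := sub_ne_zero.mpr hne
    have hc : ((a + τ * a ^ q) ^ 2 - τ) * c = 0 := by
      linear_combination e2 + c * τ * hac
    have ha : ((a + τ * a ^ q) ^ 2 - τ) * (a - τ * a ^ q) = 0 := by
      linear_combination e0 - e1 + τ * (a - τ * a ^ q) * hac
    simp only [mul_eq_zero, hne', false_or] at hc ha
    refine hgZ (mem_ZSet_of_scalar H ?_ hg hc (by linear_combination ha))
    simpa only [pow_succ _ q] using hac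
  refine ⟨hT, ?_⟩
  linear_combination -e0 + a * hT - τ * (a + (a + τ * a ^ q)) * hac - (a + τ * a ^ q) * hT
    - (a + τ * a ^ q) * τ * h2

lemma blockTrace_eq {F : Type*} [Field F] {q : ℕ} {g : GL (Fin 3) F} {a c τ : F}
    (hg : (g : Matrix (Fin 3) (Fin 3) F) = mlMat q a c τ) : blockTrace g = a + τ * a ^ q := by
  simp [blockTrace, hg, mlMat]

/-- The scalar `ε` of an element `diag(ε, ε, 1)`, read off as the upper left entry; it is defined
for arbitrary `g` but meaningful only on `ZSet q F`. -/
def scal {F : Type*} [Field F] (g : GL (Fin 3) F) : F := (g : Matrix (Fin 3) (Fin 3) F) 0 0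

lemma val_eq_of_mem_ZSet {F : Type*} [Field F] {q : ℕ} {k : GL (Fin 3) F} (hk : k ∈ ZSet q F) :
    (k : Matrix (Fin 3) (Fin 3) F) = Matrix.diagonal ![scal k, scal k, 1] := by
  obtain ⟨ε, -, h⟩ := hk
  have : scal k = ε := by simp [scal, h]
  rw [this, h]

lemma scal_inj {F : Type*} [Field F] {q : ℕ} {k l : GL (Fin 3) F} (hk : k ∈ ZSet q F)
    (hl : l ∈ ZSet q F) (h : scal k = scal l) : k = l := by
  apply Units.ext
  rw [val_eq_of_mem_ZSet hk, val_eq_of_mem_ZSet hl, h]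

lemma scal_mul {F : Type*} [Field F] {q : ℕ} {k : GL (Fin 3) F} (hk : k ∈ ZSet q F)
    (l : GL (Fin 3) F) : scal (k * l) = scal k * scal l := by
  have := val_eq_of_mem_ZSet hk
  simp only [scal, Units.val_mul] at this ⊢
  rw [this]
  simp

lemma blockTrace_mul {F : Type*} [Field F] {q : ℕ} {k : GL (Fin 3) F} (hk : k ∈ ZSet q F)
    (l : GL (Fin 3) F) : blockTrace (k * l) = scal k * blockTrace l := by
  rw [blockTrace, Units.val_mul, val_eq_of_mem_ZSet hk]
  simp [blockTrace, mul_add]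

/-- If `t` conjugates `g` to `z g⁻¹` with `z` scalar, and `g` has nonzero block trace, comparing
traces gives `z = det g`. -/
lemma scal_conj {F : Type*} [Field F] {q : ℕ} {g x : GL (Fin 3) F} (t : GL (Fin 3) F)
    {a c τ : F} (hac : a ^ (q + 1) - c ^ (q + 1) = 1)
    (hg : (g : Matrix (Fin 3) (Fin 3) F) = mlMat q a c τ) (hT : blockTrace g ≠ 0)
    (hx : x = t * g * t⁻¹) (hxM : x ∈ MlSet q F) (hz : x * g ∈ ZSet q F) :
    scal (x * g) = τ := by
  obtain ⟨a1, c1, τ1, -, -, hx1⟩ := hxM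
  have htr : Matrix.trace (x : Matrix (Fin 3) (Fin 3) F) =
      Matrix.trace (g : Matrix (Fin 3) (Fin 3) F) := by
    rw [hx, Units.val_mul, Units.val_mul, Matrix.trace_units_conj]
  rw [hx1, hg] at htr
  simp [Matrix.trace, Fin.sum_univ_three, mlMat] at htr
  rw [blockTrace_eq hg] at hT
  have hv := val_eq_of_mem_ZSet hz
  generalize scal (x * g) = z at hv ⊢
  rw [Units.val_mul, hx1, hg] at hv
  have e00 := congrFun (congrFun hv 0) 0
  have e01 := congrFun (congrFun hv 0) 1
  have e10 := congrFun (congrFun hv 1) 0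
  have e11 := congrFun (congrFun hv 1) 1
  simp [mlMat, Matrix.mul_apply, Fin.sum_univ_three] at e00 e01 e10 e11
  simp only [pow_succ _ q] at hac
  apply mul_right_cancel₀ hT
  linear_combination -(τ * a ^ q) * e00 + c * e01 - a * e11 + τ * c ^ q * e10
    + τ * (a1 + τ1 * a1 ^ q) * hac + τ * htr

/-! ### Counting over the fibres of `L → S₃` -/

section fibres

variable {F : Type*} [Field F] {q : ℕ} {L : Subgroup (GL (Fin 3) F)}

/-- The number of points of the Hermitian curve fixed by `g`, for `g` in `MlSet q F`
(see `ncard_fixed`). -/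
noncomputable def fixCount (q : ℕ) (g : GL (Fin 3) F) : ℕ :=
  (fixAff q (g : Matrix (Fin 3) (Fin 3) F)).ncard + (fixInf q (g : Matrix (Fin 3) (Fin 3) F)).ncard

open Classical in
lemma card_fibre [Fintype L] (φ : L →* Equiv.Perm (Fin 3)) (hφ : Function.Surjective φ)
    (σ : Equiv.Perm (Fin 3)) :
    (Finset.univ.filter (fun g : L => φ g = σ)).card
      = (Finset.univ.filter (fun g : L => φ g = 1)).card := by
  obtain ⟨g, rfl⟩ := hφ σ
  refine Finset.card_bij' (fun x _ => g⁻¹ * x) (fun x _ => g * x) ?_ ?_ ?_ ?_ <;>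
    simp +contextual

open Classical in
lemma sum_fibre_one [Fintype F] [Fintype L] (H : QuadData q F) (hF : Fintype.card F = q ^ 2)
    (φ : L →* Equiv.Perm (Fin 3)) (hφZ : ∀ x : L, φ x = 1 ↔ (x : GL (Fin 3) F) ∈ ZSet q F) :
    ∑ g : L with φ g = 1, fixCount q (g : GL (Fin 3) F)
      = (affPts q F).ncard + (Finset.univ.filter (fun g : L => φ g = 1)).card * (q + 1) := by
  have h1 : ∀ g ∈ Finset.univ.filter (fun g : L => φ g = 1), fixCount q (g : GL (Fin 3) F)
      = (if g = 1 then (affPts q F).ncard else 0) + (q + 1) := by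
    intro g hg
    have hgZ := (hφZ g).mp (by simpa using hg)
    have hv := val_eq_of_mem_ZSet hgZ
    rw [fixCount]
    congr 1
    · split_ifs with h
      · subst h
        simp [fixAff_one]
      · rw [hv, fixAff_scalar, Set.ncard_empty]
        intro hs
        apply h
        apply Subtype.ext
        apply scal_inj hgZ ((hφZ 1).mp (map_one φ))
        simpa [scal] using hs
    · rw [hv, fixInf_scalar H.two_le hF]
  rw [Finset.sum_congr rfl h1, Finset.sum_add_distrib]
  simp

open Classical in
lemma sum_fibre_involution [Fintype F] [Fintype L] (H : QuadData q F)
    (hL : (L : Set (GL (Fin 3) F)) ⊆ MlSet q F)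
    (φ : L →* Equiv.Perm (Fin 3)) (hφZ : ∀ x : L, φ x = 1 ↔ (x : GL (Fin 3) F) ∈ ZSet q F)
    {σ : Equiv.Perm (Fin 3)} (hσ : σ ≠ 1) (hσ2 : σ ^ 2 = 1) :
    ∑ g : L with φ g = σ, fixCount q (g : GL (Fin 3) F)
      = (Finset.univ.filter (fun g : L => φ g = σ)).card := by
  rw [Finset.card_eq_sum_ones]
  refine Finset.sum_congr rfl fun g hg => ?_
  have hgσ : φ g = σ := by simpa using hg
  obtain ⟨a, c, τ, hac, hτ, hM⟩ := hL g.2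
  have hd := involution_data H hac hM (fun h => hσ (hgσ ▸ (hφZ g).mpr h))
    ((hφZ (g ^ 2)).mp (by rw [map_pow, hgσ, hσ2]))
  change _ = mlMat q a c τ at hM
  rw [fixCount, hM, fixAff_involution H hac hd.1 hd.2, fixInf_involution H hτ hd.1 hd.2,
    Set.ncard_empty]

/-- Over a 3-cycle, some element has block trace `1`: if `g` has block trace `T`, then both
`T²` (from inverting `g` by conjugation) and `T³` (from `g³`) are scalars in `L`. -/
lemma exists_blockTrace_one (H : QuadData q F) (hL : (L : Set (GL (Fin 3) F)) ⊆ MlSet q F)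
    (φ : L →* Equiv.Perm (Fin 3)) (hφ : Function.Surjective φ)
    (hφZ : ∀ x : L, φ x = 1 ↔ (x : GL (Fin 3) F) ∈ ZSet q F)
    {σ : Equiv.Perm (Fin 3)} (hσ2 : σ ^ 2 ≠ 1) :
    ∃ g : L, φ g = σ ∧ blockTrace (g : GL (Fin 3) F) = 1 := by
  have hσ : σ ≠ 1 ∧ σ ^ 3 = 1 ∧ ∃ π : Equiv.Perm (Fin 3), π * σ * π⁻¹ * σ = 1 := by
    revert hσ2; revert σ; decide
  obtain ⟨hσ1, hσ3, π, hπ⟩ := hσ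
  obtain ⟨g, hg⟩ := hφ σ
  obtain ⟨t, ht⟩ := hφ π
  obtain ⟨a, c, τ, hac, hτ, hM⟩ := hL g.2
  change _ = mlMat q a c τ at hM
  have hgZ : (g : GL (Fin 3) F) ∉ ZSet q F := fun h => hσ1 (hg ▸ (hφZ g).mpr h)
  have h3 : φ (g ^ 3) = 1 := by rw [map_pow, hg, hσ3]
  have hz : φ (t * g * t⁻¹ * g) = 1 := by simp [hg, ht, hπ]
  have h3Z := (hφZ _).mp h3
  have hzZ := (hφZ _).mp hz
  have hd := three_data H hac hM hgZ (val_eq_of_mem_ZSet h3Z)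
  have hT := blockTrace_eq hM
  rw [← hT] at hd
  have hτ0 : τ ≠ 0 := by rintro rfl; simp at hτ
  have hT0 : blockTrace (g : GL (Fin 3) F) ≠ 0 := by
    intro h; apply hτ0; rw [← hd.1, h]; simp
  have hsz := scal_conj (t : GL (Fin 3) F) hac hM hT0 (x := ((t * g * t⁻¹ : L) : GL (Fin 3) F))
    rfl (hL (t * g * t⁻¹).2) hzZ
  -- `k` is the scalar `T`
  obtain ⟨k, hk⟩ : ∃ k : L, k = g ^ 3 * (t * g * t⁻¹ * g)⁻¹ := ⟨_, rfl⟩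
  have hkφ : φ k = 1 := by rw [hk, map_mul, map_inv, h3, hz]; simp
  have hkZ := (hφZ _).mp hkφ
  have hks : scal (k : GL (Fin 3) F) = blockTrace (g : GL (Fin 3) F) := by
    have e := scal_mul hkZ ((t * g * t⁻¹ * g : L) : GL (Fin 3) F)
    have e' : k * (t * g * t⁻¹ * g) = g ^ 3 := by rw [hk]; group
    rw [← Subgroup.coe_mul, e'] at e
    have e2 : scal ((t * g * t⁻¹ * g : L) : GL (Fin 3) F) = τ := hsz
    rw [e2, ← hd.1] at e
    have e3 := e.symm.trans hd.2
    apply mul_right_cancel₀ (pow_ne_zero 2 hT0)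
    rw [e3]; ring
  refine ⟨k⁻¹ * g, by simp [hkφ, hg], ?_⟩
  have e := blockTrace_mul hkZ ((k⁻¹ * g : L) : GL (Fin 3) F)
  rw [← Subgroup.coe_mul, mul_inv_cancel_left, hks] at e
  apply mul_left_cancel₀ hT0
  rw [← e, mul_one]

open Classical in
/-- On the fibre of a 3-cycle the block trace is a bijection onto the scalars of `L`. Only the two
elements whose block trace is a primitive cube root of unity have the eigenvalue `1`, and each of
them fixes `q + 1` affine points. -/
lemma sum_fibre_three [Fintype F] [Fintype L] (H : QuadData q F) (hF : Fintype.card F = q ^ 2)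
    (h3 : 3 ∣ q + 1) (hL : (L : Set (GL (Fin 3) F)) ⊆ MlSet q F)
    (φ : L →* Equiv.Perm (Fin 3)) (hφ : Function.Surjective φ)
    (hφZ : ∀ x : L, φ x = 1 ↔ (x : GL (Fin 3) F) ∈ ZSet q F)
    (hw : 3 ∣ (Finset.univ.filter (fun g : L => φ g = 1)).card)
    {σ : Equiv.Perm (Fin 3)} (hσ2 : σ ^ 2 ≠ 1) :
    ∑ g : L with φ g = σ, fixCount q (g : GL (Fin 3) F) = 2 * (q + 1) := by
  have hσ : σ ≠ 1 ∧ σ ^ 3 = 1 := by revert hσ2; revert σ; decide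
  have h1 : ∀ g ∈ Finset.univ.filter (fun g : L => φ g = σ), fixCount q (g : GL (Fin 3) F)
      = if 1 + blockTrace (g : GL (Fin 3) F) + blockTrace (g : GL (Fin 3) F) ^ 2 = 0
        then q + 1 else 0 := by
    intro g hg
    have hgσ : φ g = σ := by simpa using hg
    obtain ⟨a, c, τ, hac, hτ, hM⟩ := hL g.2
    change _ = mlMat q a c τ at hM
    have hd := (three_data H hac hM (fun h => hσ.1 (hgσ ▸ (hφZ g).mpr h))
      (val_eq_of_mem_ZSet ((hφZ (g ^ 3)).mp (by rw [map_pow, hgσ, hσ.2])))).1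
    rw [blockTrace_eq hM, fixCount, hM, fixInf_three H h3 hac hτ hd, Set.ncard_empty, add_zero]
    split_ifs with h
    · exact fixAff_three H hF hac hτ hd h
    · rw [fixAff_three_empty hac hd h H, Set.ncard_empty]
  rw [Finset.sum_congr rfl h1, ← Finset.sum_filter, Finset.sum_const, smul_eq_mul]
  congr 1
  -- a scalar `ω` of order three, and an element of block trace `1`
  obtain ⟨x, hx⟩ : ∃ x : φ.ker, orderOf x = 3 := by
    have : Fact (Nat.Prime 3) := ⟨Nat.prime_three⟩
    apply exists_prime_orderOf_dvd_card'
    convert hw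
    rw [Nat.card_eq_fintype_card]
    exact Fintype.card_of_subtype _ (by simp [MonoidHom.mem_ker])
  have hx3 : (x : L) ^ 3 = 1 := by
    have := pow_orderOf_eq_one x
    rw [hx] at this
    exact_mod_cast congrArg Subtype.val this
  have hx1 : (x : L) ≠ 1 := by
    intro h
    have : x = 1 := Subtype.ext h
    simp [this] at hx
  have hxφ : φ x = 1 := x.2
  have hxZ := (hφZ _).mp hxφ
  have h1Z := (hφZ _).mp (map_one φ)
  have hx2Z := (hφZ ((x : L) ^ 2)).mp (by simp [hxφ])
  obtain ⟨ω, hω⟩ : ∃ ω, ω = scal ((x : L) : GL (Fin 3) F) := ⟨_, rfl⟩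
  have hs1 : scal ((1 : L) : GL (Fin 3) F) = 1 := by simp [scal]
  have hs2 : scal (((x : L) ^ 2 : L) : GL (Fin 3) F) = ω ^ 2 := by
    rw [pow_two, Subgroup.coe_mul, scal_mul hxZ, ← hω, pow_two]
  have hω1 : ω ≠ 1 := by
    intro h
    exact hx1 (Subtype.ext (scal_inj hxZ h1Z (by rw [← hω, h, hs1])))
  have hω3 : ω ^ 3 = 1 := by
    have : (x : L) * (x : L) ^ 2 = 1 := by rw [← pow_succ', hx3]
    have h := scal_mul hxZ (((x : L) ^ 2 : L) : GL (Fin 3) F)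
    rw [← Subgroup.coe_mul, this, hs1, hs2, ← hω] at h
    rw [h]; ring
  have hω0 : 1 + ω + ω ^ 2 = 0 := by
    have : (ω - 1) * (1 + ω + ω ^ 2) = 0 := by linear_combination hω3
    simpa [sub_eq_zero, hω1] using this
  obtain ⟨g, hgσ, hgT⟩ := exists_blockTrace_one H hL φ hφ hφZ hσ2
  have hset : (Finset.univ.filter (fun g : L => φ g = σ)).filter
      (fun g : L => 1 + blockTrace (g : GL (Fin 3) F) + blockTrace (g : GL (Fin 3) F) ^ 2 = 0)
      = {(x : L) * g, (x : L) ^ 2 * g} := by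
    ext y
    simp only [Finset.mem_filter, Finset.mem_univ, true_and, Finset.mem_insert,
      Finset.mem_singleton]
    constructor
    · rintro ⟨hy, hyT⟩
      have hkφ : φ (y * g⁻¹) = 1 := by simp [hy, hgσ]
      have hkZ := (hφZ _).mp hkφ
      have e := blockTrace_mul hkZ (g : GL (Fin 3) F)
      rw [← Subgroup.coe_mul, inv_mul_cancel_right, hgT, mul_one] at e
      rw [e] at hyT
      generalize hε : scal ((y * g⁻¹ : L) : GL (Fin 3) F) = ε at hyT
      have : (ε - ω) * (ε - ω ^ 2) = 0 := by linear_combination hyT + hω3 - ε * hω0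
      rcases mul_eq_zero.mp this with h | h
      · left
        rw [← mul_inv_eq_iff_eq_mul]
        exact Subtype.ext (scal_inj hkZ hxZ (by rw [hε, ← hω]; linear_combination h))
      · right
        rw [← mul_inv_eq_iff_eq_mul]
        exact Subtype.ext (scal_inj hkZ hx2Z (by rw [hε, hs2]; linear_combination h))
    · rintro (rfl | rfl)
      · refine ⟨by simp [hxφ, hgσ], ?_⟩
        rw [Subgroup.coe_mul, blockTrace_mul hxZ, hgT, ← hω]
        linear_combination hω0
      · refine ⟨by simp [hxφ, hgσ], ?_⟩
        rw [Subgroup.coe_mul, blockTrace_mul hx2Z, hgT, hs2]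
        linear_combination hω0 + ω * hω3
  rw [hset, Finset.card_pair]
  intro h
  apply hx1
  have := mul_right_cancel h
  rw [pow_two] at this
  exact (mul_eq_left.mp this.symm)

end fibres

theorem stmt6 (h q w : ℕ) (hh : 1 ≤ h) (hq : q = 2 ^ h) (hodd : Odd h)
    (F : Type*) [Field F] [Fintype F] (hF : Fintype.card F = q ^ 2)
    (hw : w ∣ q + 1) (h3w : 3 ∣ w)
    (L : Subgroup (GL (Fin 3) F)) (hLMl : (L : Set (GL (Fin 3) F)) ⊆ MlSet q F)
    (hZcard : Nat.card ((L : Set (GL (Fin 3) F)) ∩ ZSet q F : Set (GL (Fin 3) F)) = w)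
    (hquot : ∃ φ : ↥L →* Equiv.Perm (Fin 3), Function.Surjective φ ∧
      ∀ x : ↥L, φ x = 1 ↔ (x : GL (Fin 3) F) ∈ ZSet q F) :
    (numOrbits L (hermitianPts q F) : ℚ)
      = ((q : ℚ) + 4) / 6 + ((q : ℚ) + 1) / (w : ℚ)
        + ((q : ℚ) + 1) * ((q : ℚ) ^ 2 - (q : ℚ) - 2) / (6 * (w : ℚ)) := by
  classical
  obtain ⟨φ, hφ, hφZ⟩ := hquot
  have hq2 : 2 ≤ q := by
    rw [hq]; calc 2 = 2 ^ 1 := rfl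
      _ ≤ 2 ^ h := Nat.pow_le_pow_right (by norm_num) hh
  have : Fact (Nat.Prime 2) := ⟨Nat.prime_two⟩
  have : CharP F 2 := by
    refine charP_of_card_eq_prime_pow (f := h * 2) ?_
    rw [hF, hq, pow_mul]
  have H : QuadData q F :=
    { two_eq := CharTwo.two_eq_zero
      two_le := hq2
      add_pow := fun x y => by rw [hq]; exact add_pow_char_pow x y 2 h
      pow_pow := fun x => by rw [← pow_mul, ← pow_two, ← hF, FiniteField.pow_card] }
  let _ : Fintype L := Fintype.ofFinite _
  have hker : (Finset.univ.filter (fun g : L => φ g = 1)).card = w := by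
    rw [← hZcard, Nat.card_coe_set_eq, ← Set.ncard_coe_finset,
      ← Set.ncard_image_of_injective _ Subtype.val_injective]
    congr 1
    ext y
    simp only [Set.mem_image, Finset.coe_filter, Finset.mem_univ, true_and, Set.mem_ofPred_eq,
      Set.mem_inter_iff, SetLike.mem_coe]
    constructor
    · rintro ⟨x, hx, rfl⟩
      exact ⟨x.2, (hφZ x).mp hx⟩
    · rintro ⟨hy, hyZ⟩
      exact ⟨⟨y, hy⟩, (hφZ ⟨y, hy⟩).mpr hyZ, rfl⟩
  have hB := burnside L (hermitianPts q F) fun g hg x hx => glAct_mem_hermitianPts H (hLMl hg) hx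
  rw [Finset.sum_congr rfl (fun g _ => ncard_fixed (hLMl g.2)),
    ← Finset.sum_fiberwise Finset.univ φ] at hB
  have hcard : Fintype.card L = 6 * w := by
    rw [← Finset.card_univ, Finset.card_eq_sum_ones, ← Finset.sum_fiberwise Finset.univ φ]
    simp only [← Finset.card_eq_sum_ones, card_fibre φ hφ, hker]
    simp [Fintype.card_perm, Nat.factorial]
  have hfib : ∀ σ : Equiv.Perm (Fin 3),
      ∑ g : L with φ g = σ, ((fixAff q ((g : GL (Fin 3) F) : Matrix (Fin 3) (Fin 3) F)).ncard
        + (fixInf q ((g : GL (Fin 3) F) : Matrix (Fin 3) (Fin 3) F)).ncard)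
      = if σ = 1 then (affPts q F).ncard + w * (q + 1) else if σ ^ 2 = 1 then w
        else 2 * (q + 1) := by
    intro σ
    split_ifs with h1 h2
    · subst h1
      rw [← hker]
      exact sum_fibre_one H hF φ hφZ
    · rw [← hker, ← card_fibre φ hφ σ]
      exact sum_fibre_involution H hLMl φ hφZ h1 h2
    · exact sum_fibre_three H hF (h3w.trans hw) hLMl φ hφ hφZ (hker ▸ h3w) h2
  rw [Finset.sum_congr rfl (fun σ _ => hfib σ), hcard, Finset.sum_ite, Finset.sum_ite,
    Finset.sum_const, Finset.sum_const, Finset.sum_const, Finset.filter_filter,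
    Finset.filter_filter] at hB
  have c1 : (Finset.univ.filter (fun σ : Equiv.Perm (Fin 3) => σ = 1)).card = 1 := by
    rw [Finset.filter_eq']; simp
  have c2 : (Finset.univ.filter (fun σ : Equiv.Perm (Fin 3) => ¬ σ = 1 ∧ σ ^ 2 = 1)).card = 3 := by
    convert (by decide : (Finset.univ.filter
      (fun σ : Equiv.Perm (Fin 3) => ¬ σ = 1 ∧ σ ^ 2 = 1)).card = 3)
  have c3 : (Finset.univ.filter
      (fun σ : Equiv.Perm (Fin 3) => ¬ σ = 1 ∧ ¬ σ ^ 2 = 1)).card = 2 := by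
    convert (by decide : (Finset.univ.filter
      (fun σ : Equiv.Perm (Fin 3) => ¬ σ = 1 ∧ ¬ σ ^ 2 = 1)).card = 2)
  simp only [c1, c2, c3, smul_eq_mul] at hB
  have hA := card_affPts H hF
  have hw0 : (w : ℚ) ≠ 0 := by
    have : w ≠ 0 := by rintro rfl; simp at hw
    exact_mod_cast this
  have hB' : (1 * (((affPts q F).ncard : ℚ) + w * (q + 1)) + (3 * w + 2 * (2 * (q + 1))))
      = numOrbits L (hermitianPts q F) * (6 * w) := by exact_mod_cast hB
  have hA' : ((affPts q F).ncard : ℚ) + q = q ^ 3 := by exact_mod_cast hA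
  field_simp
  linear_combination hA' - hB'
end

section
/- Let f | h with f > 1 and let w be a divisor of q+1. Let L̄ ≤ M_ℓ be a subgroup such that |L̄ ∩ Z| = w and L̄ is the internal direct product of L̄ ∩ Z and a subgroup S isomorphic to SL(2, 𝔽_{2^f}). If h/f is odd, then the number N of orbits of L̄ acting on O equals 1 + (q−2^f)/(2^f(2^{2f}−1)) + (q+1)·gcd(w, 2^f+1)/((2^f+1)·w) + ((q+1)/w)·(q(q−1) − 2^f(2^f−1))/(2^f(2^f−1)(2^f+1)). If h/f is even, then N = 2 + (q−2^{2f})/(2^f(2^{2f}−1)) + (q/2^f)·((q−1)/(2^{2f}−1))·((q+1)/w). -/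
/-!
The number of orbits is computed with Burnside's lemma (`burnside`). The points of the Hermitian
curve split into the affine points `(x : y : 1)` with `x ^ (q + 1) - y ^ (q + 1) = 1` and the
`q + 1` points `(x : 1 : 0)` with `x ^ (q + 1) = 1` on the line at infinity; `card_fix` counts the
fixed points of a group element accordingly.

*Shape of the group.* `SL(2, 2 ^ f)` is generated by involutions, whereas the determinant `τ` of an
element of `M_ℓ` satisfies `τ ^ (q + 1) = 1` with `q + 1` odd. Hence the determinant is trivial on
`S`, and `S` is the image of an embedding `ρ : SL(2, 2 ^ f) → SL(2, F)` with values in the matrices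
`[[a, c ^ q], [c, a ^ q]]` (`exists_rep`). Every element of `L` is uniquely `ρ A · diag(e, e, 1)`
with `A ∈ SL(2, 2 ^ f)` and `e ^ w = 1` (`exists_param`).

*Fixed points.* The element `ρ A · diag(e, e, 1)` fixes an affine point `(x : y : 1)` iff `(x, y)`
is an eigenvector of `ρ A` with eigenvalue `e⁻¹`. For `A ≠ 1` there are `q + 1` such points if
`e⁻¹ ≠ 1` is an eigenvalue of `ρ A`, and none otherwise (`card_fix_affine`, `card_fix_affine_one`).
The fixed points at infinity do not depend on `e`; for `A ≠ 1` they correspond to the eigenvalues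
of `ρ A` in `𝔽_q` (`card_fix_infinity`). By `card_eigenvalues`, for odd `n ∣ q ^ 2 - 1` the matrix
`ρ A` has two eigenvalues `l ≠ 1` with `l ^ n = 1` when `A ≠ 1` and `A ^ n = 1`, and none otherwise.
So the sum of all fixed-point counts only involves the numbers of elements of `SL(2, 2 ^ f)` killed
by `w`, by `q - 1` and by `2` (`sum_fix`, `orbit_count`); no information on `ρ` beyond its
existence is needed.

*Torsion in `SL(2, 2 ^ f)`.* Counting pairs (matrix, eigenvalue) in two ways expresses the number of
elements killed by an odd `n` through `gcd(n, 2 ^ f - 1)` and `gcd(n, 2 ^ f + 1)`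
(`card_SL_torsion`). For `n = w` and `n = q - 1` these gcds are determined by the parity of `h / f`:
`2 ^ f - 1` always divides `q - 1`, while `2 ^ f + 1` divides `q + 1` if `h / f` is odd and `q - 1`
if `h / f` is even.
-/

open Matrix

namespace HermitianOrbits
open Finset

/-! ### Roots of unity, norms and eigenvalues over finite fields -/

lemma card_rootsOfUnity_field {F : Type*} [Field F] [Fintype F] [DecidableEq F] {n : ℕ}
    (hn : n ∣ Fintype.card F - 1) : #{x : F | x ^ n = 1} = n := by
  have hcard : 1 < Fintype.card F := Fintype.one_lt_card
  have hn0 : 0 < n := Nat.pos_of_dvd_of_pos hn (by omega)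
  obtain ⟨g, hg⟩ := IsCyclic.exists_generator (α := Fˣ)
  have ho : orderOf g = Fintype.card F - 1 := by
    rw [orderOf_eq_card_of_forall_mem_zpowers hg, Nat.card_units, Nat.card_eq_fintype_card]
  obtain ⟨m, hm⟩ := hn
  have hprim : IsPrimitiveRoot ((g : F)) (n * m) := by
    rw [← hm, ← ho, ← orderOf_units]
    exact IsPrimitiveRoot.orderOf _
  have hp : IsPrimitiveRoot ((g : F) ^ m) n :=
    hprim.pow (by rw [← hm]; omega) (by ring)
  refine Eq.trans (congrArg Finset.card ?_) hp.card_nthRootsFinset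
  ext x
  simp [Polynomial.mem_nthRootsFinset hn0]

/-- Surjectivity of the norm map `F → 𝔽_q` away from zero. -/
lemma exists_norm_eq {F : Type*} [Field F] [Fintype F] {q : ℕ} (hF : Fintype.card F = q ^ 2)
    {b : F} (hb0 : b ≠ 0) (hb : b ^ q = b) : ∃ k : F, k ^ (q + 1) = b := by
  have hcard : 1 < Fintype.card F := Fintype.one_lt_card
  have hq : 2 ≤ q := by by_contra hlt; interval_cases q <;> simp_all
  obtain ⟨g, hg⟩ := IsCyclic.exists_generator (α := Fˣ)
  have ho : orderOf g = Fintype.card F - 1 := by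
    rw [orderOf_eq_card_of_forall_mem_zpowers hg, Nat.card_units, Nat.card_eq_fintype_card]
  obtain ⟨i, hi⟩ := (mem_powers_iff_mem_zpowers.2 (hg (Units.mk0 b hb0)))
  have hi' : (g : F) ^ i = b := by
    have := congrArg (Units.val) hi
    simpa using this
  have h1 : g ^ (i * (q - 1)) = 1 := by
    ext
    have : b ^ (q - 1) = 1 := by
      have h2 : b ^ (q - 1) * b = 1 * b := by
        rw [← pow_succ, Nat.sub_add_cancel (by omega), hb, one_mul]
      exact mul_right_cancel₀ hb0 h2
    push_cast
    rw [pow_mul, hi', this]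
  have h2 := orderOf_dvd_of_pow_eq_one h1
  have h3 : (q + 1) * (q - 1) = q ^ 2 - 1 := by
    have := Nat.sq_sub_sq q 1
    simpa using this.symm
  rw [ho, hF, ← h3] at h2
  obtain ⟨j, rfl⟩ := Nat.dvd_of_mul_dvd_mul_right (by omega) h2
  exact ⟨(g : F) ^ j, by rw [← hi', ← pow_mul]; ring⟩

/-- The norm map `F → 𝔽_q` has all its fibres over nonzero elements of size `q + 1`; membership
of `b` in `𝔽_q` is expressed as `b ^ q = b`. -/
lemma card_norm_eq {F : Type*} [Field F] [Fintype F] [DecidableEq F] {q : ℕ}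
    (hF : Fintype.card F = q ^ 2)
    {b : F} (hb0 : b ≠ 0) (hb : b ^ q = b) : #{k : F | k ^ (q + 1) = b} = q + 1 := by
  obtain ⟨k, hk⟩ := exists_norm_eq hF hb0 hb
  have hk0 : k ≠ 0 := by rintro rfl; simp at hk; exact hb0 hk.symm
  have h3 : (q + 1) ∣ Fintype.card F - 1 := by
    have := Nat.sq_sub_sq q 1
    rw [hF]; exact ⟨q - 1, by simpa using this⟩
  refine Eq.trans ?_ (card_rootsOfUnity_field h3)
  apply Finset.card_bij' (fun x _ => x / k) (fun x _ => x * k)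
  · intro x hx; simp at hx ⊢; rw [div_pow, hx, hk, div_self hb0]
  · intro x hx; simp at hx ⊢; rw [mul_pow, hx, hk, one_mul]
  · intro x _; simp [hk0]
  · intro x _; simp [hk0]

/-- Here `e ^ 2 + tr A * e + 1` is the characteristic polynomial of `A`, as `F` has characteristic
two. If it has a root `e ≠ 1` with `e ^ n = 1`, then the roots are `e ≠ e⁻¹` and `A` is killed by
`(X - e) (X - e⁻¹) ∣ X ^ n - 1`. Conversely, if `A ^ n = 1` then the characteristic polynomial
cannot be coprime to `X ^ n - 1`; and a root `e = 1` would make `A` an involution of odd order. -/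
lemma card_eigenvalues {F : Type*} [Field F] [Fintype F] [DecidableEq F] [CharP F 2] {n : ℕ}
    (hn : n ∣ Fintype.card F - 1) (hodd : Odd n) (A : Matrix.SpecialLinearGroup (Fin 2) F) :
    #{e : F | e ^ n = 1 ∧ e ≠ 1 ∧ e ^ 2 + (A 0 0 + A 1 1) * e + 1 = 0}
      = if A ≠ 1 ∧ A ^ n = 1 then 2 else 0 := by
  set t := A 0 0 + A 1 1 with ht
  have h2 : (2 : F) = 0 := CharTwo.two_eq_zero
  have hn0 : n ≠ 0 := by rintro rfl; simp at hodd
  have hdet : A 0 0 * A 1 1 - A 0 1 * A 1 0 = 1 := by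
    have := A.det_coe; rwa [Matrix.det_fin_two] at this
  have hCH : (A : Matrix (Fin 2) (Fin 2) F) * A = t • (A : Matrix (Fin 2) (Fin 2) F) - 1 := by
    ext i j
    fin_cases i <;> fin_cases j <;> simp [Matrix.mul_apply, Fin.sum_univ_two, ht] <;>
      first | ring1 | linear_combination (-1) * hdet
  by_cases hex : ∃ e : F, e ^ n = 1 ∧ e ≠ 1 ∧ e ^ 2 + t * e + 1 = 0
  · obtain ⟨e, hen, he1, he⟩ := hex
    have he0 : e ≠ 0 := by rintro rfl; simp at he
    have hee : e ≠ e⁻¹ := by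
      intro hh
      have : e * e = 1 := by nth_rewrite 2 [hh]; exact mul_inv_cancel₀ he0
      apply he1
      have : (e - 1) ^ 2 = 0 := by linear_combination this + (1 - e) * h2
      exact sub_eq_zero.1 (pow_eq_zero_iff (by norm_num) |>.1 this)
    have hte : t = e + e⁻¹ := by
      field_simp
      linear_combination he - (e ^ 2 + 1) * h2
    have hset : ({e : F | e ^ n = 1 ∧ e ≠ 1 ∧ e ^ 2 + t * e + 1 = 0} : Finset F) = {e, e⁻¹} := by
      ext x
      simp only [mem_filter, mem_univ, true_and, mem_insert, mem_singleton]
      constructor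
      · rintro ⟨-, -, hx⟩
        have : (x - e) * (x - e⁻¹) = 0 := by
          have h5 := mul_inv_cancel₀ he0
          rw [hte] at hx
          linear_combination hx + h5 - (x * (e + e⁻¹)) * h2
        rcases mul_eq_zero.1 this with h | h
        · left; exact sub_eq_zero.1 h
        · right; exact sub_eq_zero.1 h
      · rintro (rfl | rfl)
        · exact ⟨hen, he1, he⟩
        · refine ⟨by rw [inv_pow, hen, inv_one], by simpa using he1, ?_⟩
          field_simp
          linear_combination he
    rw [hset, card_pair hee, if_pos]
    refine ⟨?_, ?_⟩
    · rintro rfl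
      apply hee
      have : t = 0 := by rw [ht]; simp; linear_combination h2
      rw [this] at hte
      linear_combination -hte - e⁻¹ * h2
    · have hdvd : (Polynomial.X - Polynomial.C e) * (Polynomial.X - Polynomial.C e⁻¹) ∣
          (Polynomial.X ^ n - 1 : Polynomial F) := by
        apply IsCoprime.mul_dvd
        · exact Polynomial.isCoprime_X_sub_C_of_isUnit_sub (sub_ne_zero.2 hee).isUnit
        · rw [Polynomial.dvd_iff_isRoot]; simp [hen]
        · rw [Polynomial.dvd_iff_isRoot]; simp [hen]
      have h0 : Polynomial.aeval (A : Matrix (Fin 2) (Fin 2) F)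
          ((Polynomial.X - Polynomial.C e) * (Polynomial.X - Polynomial.C e⁻¹)) = 0 := by
        have : (Polynomial.X - Polynomial.C e) * (Polynomial.X - Polynomial.C e⁻¹)
            = Polynomial.X ^ 2 - Polynomial.C t * Polynomial.X + 1 := by
          rw [hte, Polynomial.C_add]
          have : Polynomial.C e * Polynomial.C e⁻¹ = 1 := by
            rw [← Polynomial.C_mul, mul_inv_cancel₀ he0, Polynomial.C_1]
          linear_combination this
        rw [this]
        simp [pow_two, hCH, Algebra.algebraMap_eq_smul_one]
      obtain ⟨r, hr⟩ := hdvd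
      have h1 := congrArg (Polynomial.aeval (A : Matrix (Fin 2) (Fin 2) F)) hr
      rw [map_mul, h0, zero_mul] at h1
      simp at h1
      apply Subtype.ext
      simpa using sub_eq_zero.1 h1
  · have hset : ({e : F | e ^ n = 1 ∧ e ≠ 1 ∧ e ^ 2 + t * e + 1 = 0} : Finset F) = ∅ := by
      ext x
      simp only [mem_filter, mem_univ, true_and, notMem_empty, iff_false]
      exact fun hx => hex ⟨x, hx⟩
    rw [hset, card_empty, if_neg]
    rintro ⟨hA1, hAn⟩
    have hdvd : (Polynomial.X ^ n - 1 : Polynomial F) ≠ 0 := Polynomial.X_pow_sub_C_ne_zero (by omega) 1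
    -- `X ^ n - 1` splits into distinct linear factors, so a characteristic polynomial without
    -- roots among them is coprime to it, which is absurd as both annihilate `A`
    have hroot : ∃ e : F, e ^ n = 1 ∧ e ^ 2 + t * e + 1 = 0 := by
      by_contra hno
      push Not at hno
      have hprod : (∏ x ∈ ({x : F | x ^ n = 1} : Finset F), (Polynomial.X - Polynomial.C x))
          = (Polynomial.X ^ n - 1 : Polynomial F) := by
        have hc := card_rootsOfUnity_field hn
        have hnd : (Polynomial.X ^ n - 1 : Polynomial F).roots
            = ({x : F | x ^ n = 1} : Finset F).val := by
          symm
          apply Multiset.eq_of_le_of_card_le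
          · rw [Multiset.le_iff_subset (Finset.nodup _)]
            intro x hx
            rw [Polynomial.mem_roots hdvd]
            simp at hx
            simp [hx]
          · refine (Polynomial.card_roots' _).trans ?_
            rw [Finset.card_val, hc]
            exact (Polynomial.natDegree_X_pow_sub_C (n := n) (r := (1 : F))).le
        have := Polynomial.prod_multiset_X_sub_C_of_monic_of_roots_card_eq
          (p := (Polynomial.X ^ n - 1 : Polynomial F)) (Polynomial.monic_X_pow_sub_C 1 hn0) (by
            rw [hnd, Finset.card_val, hc]
            exact (Polynomial.natDegree_X_pow_sub_C (n := n) (r := (1 : F))).symm)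
        rw [hnd] at this
        exact this
      have hcop : IsCoprime (Polynomial.X ^ 2 - Polynomial.C t * Polynomial.X + 1 : Polynomial F)
          (Polynomial.X ^ n - 1) := by
        rw [← hprod]
        apply IsCoprime.prod_right
        intro x hx
        rw [isCoprime_comm, (Polynomial.irreducible_X_sub_C x).coprime_iff_not_dvd,
          Polynomial.dvd_iff_isRoot]
        simp at hx ⊢
        intro h
        exact hno x hx (by linear_combination h + t * x * h2)
      obtain ⟨a, b, hab⟩ := hcop
      have h1 := congrArg (Polynomial.aeval (A : Matrix (Fin 2) (Fin 2) F)) hab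
      have hAn' : (A : Matrix (Fin 2) (Fin 2) F) ^ n = 1 := by
        simpa using congrArg Subtype.val hAn
      simp [pow_two, hCH, Algebra.algebraMap_eq_smul_one, hAn'] at h1
    obtain ⟨e, hen, he⟩ := hroot
    by_cases he1 : e = 1
    · subst he1
      have ht0 : t = 0 := by linear_combination he - h2
      have hsq : A ^ 2 = 1 := by
        apply Subtype.ext
        rw [pow_two]
        refine (hCH.trans ?_ : (A : Matrix (Fin 2) (Fin 2) F) * A = 1)
        rw [ht0]
        ext i j
        fin_cases i <;> fin_cases j <;> simp <;> linear_combination -h2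
      apply hA1
      obtain ⟨m, rfl⟩ := hodd
      simpa [pow_succ, pow_mul, hsq] using hAn
    · exact hex ⟨e, hen, he1, he⟩

/-! ### Counting in `SL(2, K)` -/

lemma card_mul_eq {K : Type*} [Field K] [Fintype K] [DecidableEq K] (d : K) :
    #{p : K × K | p.1 * p.2 = d} =
      (Fintype.card K - 1) + if d = 0 then Fintype.card K else 0 := by
  have hc : 1 < Fintype.card K := Fintype.one_lt_card
  have h1 : #{p : K × K | p.1 * p.2 = d} = ∑ b : K, #{c : K | b * c = d} := by
    rw [Finset.card_filter, Fintype.sum_prod_type]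
    exact Finset.sum_congr rfl fun b _ => (Finset.card_filter _ _).symm
  have h2 : ∀ b ∈ (univ : Finset K).erase 0, #{c : K | b * c = d} = 1 := by
    intro b hb
    rw [mem_erase] at hb
    rw [Finset.card_eq_one]
    refine ⟨d / b, ?_⟩
    ext c
    simp only [mem_filter, mem_univ, true_and, mem_singleton]
    rw [eq_div_iff hb.1, mul_comm]
  rw [h1, ← Finset.sum_erase_add _ _ (mem_univ (0 : K)), Finset.sum_congr rfl h2]
  congr 1
  · simp [Finset.card_erase_of_mem]
  · by_cases hd : d = 0
    · simp [hd]
    · simp [hd, Ne.symm hd]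

/-- A matrix of trace `t` is given by its first diagonal entry `a` and by two off-diagonal entries
with product `a * (t - a) - 1`; this product vanishes exactly at the roots of the characteristic
polynomial. -/
lemma card_SL_trace {K : Type*} [Field K] [Fintype K] [DecidableEq K] (t : K) :
    #{A : Matrix.SpecialLinearGroup (Fin 2) K | A 0 0 + A 1 1 = t} =
      Fintype.card K * (Fintype.card K - 1)
        + Fintype.card K * #{x : K | x ^ 2 - t * x + 1 = 0} := by
  have h1 : #{A : Matrix.SpecialLinearGroup (Fin 2) K | A 0 0 + A 1 1 = t} =
      #((univ : Finset K).sigma fun a => ({p : K × K | p.1 * p.2 = a * (t - a) - 1} : Finset _)) := by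
    refine Finset.card_bij (fun A _ => ⟨A 0 0, (A 0 1, A 1 0)⟩) ?_ ?_ ?_
    · intro A hA
      have hdet : A 0 0 * A 1 1 - A 0 1 * A 1 0 = 1 := by
        have := A.det_coe; rwa [Matrix.det_fin_two] at this
      simp at hA ⊢
      rw [← hA]; linear_combination -hdet
    · intro A hA B hB hAB
      simp at hA hB hAB
      obtain ⟨h1, h2, h3⟩ := hAB
      apply Subtype.ext
      ext i j
      fin_cases i <;> fin_cases j
      · exact h1
      · exact h2
      · exact h3
      · have : A 1 1 = B 1 1 := by linear_combination hA - hB - h1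
        exact this
    · rintro ⟨a, b, c⟩ hs
      simp at hs
      obtain ⟨M, hM⟩ : ∃ M : Matrix.SpecialLinearGroup (Fin 2) K,
          (M : Matrix (Fin 2) (Fin 2) K) = !![a, b; c, t - a] :=
        ⟨⟨_, by rw [Matrix.det_fin_two_of, hs]; ring⟩, rfl⟩
      exact ⟨M, mem_filter.2 ⟨mem_univ _, by simp [hM]⟩, by simp [hM]⟩
  rw [h1, Finset.card_sigma]
  simp only [card_mul_eq]
  rw [Finset.sum_add_distrib, ← Finset.sum_filter, Finset.sum_const, Finset.sum_const, smul_eq_mul,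
    smul_eq_mul, Finset.card_univ, mul_comm _ (Fintype.card K)]
  congr 3
  ext x
  simp only [mem_filter, mem_univ, true_and]
  constructor <;> intro h <;> linear_combination -h

lemma card_SL {K : Type*} [Field K] [Fintype K] [DecidableEq K] :
    Fintype.card (Matrix.SpecialLinearGroup (Fin 2) K) =
      Fintype.card K * (Fintype.card K - 1) * (Fintype.card K + 1) := by
  have h := Finset.card_eq_sum_card_fiberwise (s := (univ : Finset (Matrix.SpecialLinearGroup (Fin 2) K)))
    (t := (univ : Finset K)) (f := fun A => A 0 0 + A 1 1) (fun _ _ => by simp)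
  rw [Finset.card_univ] at h
  rw [h]
  simp only [card_SL_trace]
  have h2 : ∑ t : K, #{x : K | x ^ 2 - t * x + 1 = 0} = Fintype.card K - 1 := by
    simp only [Finset.card_filter]
    rw [Finset.sum_comm, ← Finset.sum_erase_add _ _ (mem_univ (0 : K))]
    have : ∀ x ∈ (univ : Finset K).erase 0, (∑ t : K, if x ^ 2 - t * x + 1 = 0 then 1 else 0) = 1 := by
      intro x hx
      rw [mem_erase] at hx
      rw [← Finset.card_filter, Finset.card_eq_one]
      refine ⟨(x ^ 2 + 1) / x, ?_⟩
      ext t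
      simp only [mem_filter, mem_univ, true_and, mem_singleton]
      rw [eq_div_iff hx.1]
      constructor <;> intro h <;> linear_combination -h
    rw [Finset.sum_congr rfl this]
    simp [Finset.card_erase_of_mem]
  rw [Finset.sum_add_distrib, ← Finset.mul_sum univ (fun t : K => #{x : K | x ^ 2 - t * x + 1 = 0}),
    h2, Finset.sum_const, Finset.card_univ, smul_eq_mul]
  ring

/-- The image of a finite field `K` in `F` is the set of all roots of `X ^ |K| - X`. -/
lemma range_embedding {K F : Type*} [Field K] [Fintype K] [Field F] [Fintype F]
    (φ : K →+* F) {y : F} (hy : y ^ Fintype.card K = y) : ∃ x, φ x = y := by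
  classical
  have hc : 1 < Fintype.card K := Fintype.one_lt_card
  have hne := FiniteField.X_pow_card_sub_X_ne_zero F hc
  have h : (univ.image φ) = (Polynomial.X ^ Fintype.card K - Polynomial.X : Polynomial F).roots.toFinset := by
    apply Finset.eq_of_subset_of_card_le
    · intro z hz
      simp only [mem_image, mem_univ, true_and] at hz
      obtain ⟨x, rfl⟩ := hz
      rw [Multiset.mem_toFinset, Polynomial.mem_roots hne]
      simp [← map_pow, FiniteField.pow_card]
    · rw [Finset.card_image_of_injective _ φ.injective, Finset.card_univ]
      refine (Multiset.toFinset_card_le _).trans ((Polynomial.card_roots' _).trans ?_)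
      rw [FiniteField.X_pow_card_sub_X_natDegree_eq F hc]
  have hy' : y ∈ univ.image φ := by
    rw [h, Multiset.mem_toFinset, Polynomial.mem_roots hne]
    simp [hy]
  simpa using hy'

/-- The number of `A ∈ SL(2, K)` having a given `e ≠ 0, 1` in the larger field `F` as an eigenvalue,
i.e. having trace `e + e⁻¹`. This trace lies in `K` iff `e ^ |K|` is `e` or `e⁻¹`, and then
`card_SL_trace` applies with two roots in `K` in the first case (`e ∈ K`) and none in the
second. -/
lemma card_SL_eigenvalue {K F : Type*} [Field K] [Fintype K] [DecidableEq K] [Field F] [Fintype F]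
    [DecidableEq F] [CharP F 2] (φ : K →+* F) {f : ℕ} (hK : Fintype.card K = 2 ^ f)
    {e : F} (he0 : e ≠ 0) (he1 : e ≠ 1) :
    #{A : Matrix.SpecialLinearGroup (Fin 2) K | e ^ 2 + φ (A 0 0 + A 1 1) * e + 1 = 0} =
      (if e ^ (2 ^ f - 1) = 1 then 2 ^ f * (2 ^ f + 1) else 0)
        + (if e ^ (2 ^ f + 1) = 1 then 2 ^ f * (2 ^ f - 1) else 0) := by
  have h2 : (2 : F) = 0 := CharTwo.two_eq_zero
  have : CharP K 2 := (φ.charP_iff φ.injective 2).2 inferInstance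
  have h2K : (2 : K) = 0 := CharTwo.two_eq_zero
  have hfpos : 1 ≤ 2 ^ f := Nat.one_le_two_pow
  have hee : e ≠ e⁻¹ := by
    intro hh
    have : e * e = 1 := by nth_rewrite 2 [hh]; exact mul_inv_cancel₀ he0
    apply he1
    have : (e - 1) ^ 2 = 0 := by linear_combination this + (1 - e) * h2
    exact sub_eq_zero.1 (pow_eq_zero_iff (by norm_num) |>.1 this)
  have hiff : ∀ t : F, e ^ 2 + t * e + 1 = 0 ↔ t = e + e⁻¹ := by
    intro t
    constructor
    · intro he
      field_simp
      linear_combination he - (e ^ 2 + 1) * h2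
    · rintro rfl
      field_simp
      linear_combination (e ^ 2 + 1) * h2
  have hm : e ^ (2 ^ f - 1) = 1 ↔ e ^ (2 ^ f) = e := by
    constructor
    · intro h
      rw [← Nat.sub_add_cancel hfpos, pow_succ, h, one_mul]
    · intro h
      apply mul_right_cancel₀ he0
      rw [← pow_succ, Nat.sub_add_cancel hfpos, h, one_mul]
  have hp : e ^ (2 ^ f + 1) = 1 ↔ e ^ (2 ^ f) = e⁻¹ := by
    rw [pow_succ, ← mul_eq_one_iff_eq_inv₀ he0]
  simp only [hm, hp]
  have hrootK : ∀ x : K, x ^ 2 ^ f = x := fun x => by rw [← hK]; exact FiniteField.pow_card x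
  by_cases hfix : e ^ (2 ^ f) = e ∨ e ^ (2 ^ f) = e⁻¹
  · have hT : (e + e⁻¹) ^ (2 ^ f) = e + e⁻¹ := by
      rw [add_pow_char_pow, inv_pow]
      rcases hfix with h | h <;> rw [h]
      rw [inv_inv, add_comm]
    obtain ⟨t, ht⟩ := range_embedding φ (y := e + e⁻¹) (by rw [hK]; exact hT)
    have hset : ({A : Matrix.SpecialLinearGroup (Fin 2) K |
        e ^ 2 + φ (A 0 0 + A 1 1) * e + 1 = 0} : Finset _)
        = ({A : Matrix.SpecialLinearGroup (Fin 2) K | A 0 0 + A 1 1 = t} : Finset _) := by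
      ext A
      simp only [mem_filter, mem_univ, true_and]
      rw [hiff, ← ht, φ.injective.eq_iff]
    rw [hset, card_SL_trace, hK]
    have hroots : ∀ x : K, x ^ 2 - t * x + 1 = 0 ↔ φ x = e ∨ φ x = e⁻¹ := by
      intro x
      rw [← map_eq_zero φ]
      simp only [map_add, map_sub, map_mul, map_pow, map_one, ht]
      have : (φ x) ^ 2 - (e + e⁻¹) * φ x + 1 = (φ x - e) * (φ x - e⁻¹) := by
        linear_combination - mul_inv_cancel₀ he0
      rw [this, mul_eq_zero, sub_eq_zero, sub_eq_zero]
    by_cases h1 : e ^ (2 ^ f) = e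
    · obtain ⟨x, hx⟩ := range_embedding φ (y := e) (by rw [hK]; exact h1)
      have hx2 : φ x⁻¹ = e⁻¹ := by rw [map_inv₀, hx]
      have : ({x : K | x ^ 2 - t * x + 1 = 0} : Finset K) = {x, x⁻¹} := by
        ext z
        simp only [mem_filter, mem_univ, true_and, mem_insert, mem_singleton]
        rw [hroots, ← hx2, ← hx, φ.injective.eq_iff, φ.injective.eq_iff]
      rw [this, card_pair, if_pos h1, if_neg (by rw [h1]; exact hee)]
      · zify [hfpos]; ring
      · intro h; exact hee (by rw [← hx2, ← hx, ← h])
    · have h3 : e ^ (2 ^ f) = e⁻¹ := by tauto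
      have : ({x : K | x ^ 2 - t * x + 1 = 0} : Finset K) = ∅ := by
        ext z
        simp only [mem_filter, mem_univ, true_and, notMem_empty, iff_false]
        rw [hroots]
        rintro (h | h)
        · apply h1; rw [← h, ← map_pow, hrootK]
        · apply h1
          have : e = φ z⁻¹ := by rw [map_inv₀, h, inv_inv]
          rw [this, ← map_pow, hrootK]
      rw [this, if_neg h1, if_pos h3]
      simp
  · have hset : ({A : Matrix.SpecialLinearGroup (Fin 2) K |
        e ^ 2 + φ (A 0 0 + A 1 1) * e + 1 = 0} : Finset _) = ∅ := by
      ext A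
      simp only [mem_filter, mem_univ, true_and, notMem_empty, iff_false]
      rw [hiff]
      intro h
      apply hfix
      have h4 : (e + e⁻¹) ^ (2 ^ f) = e + e⁻¹ := by rw [← h, ← map_pow, hrootK]
      rw [add_pow_char_pow, inv_pow] at h4
      have he' : e ^ (2 ^ f) ≠ 0 := pow_ne_zero _ he0
      have : (e ^ (2 ^ f) - e) * (e ^ (2 ^ f) - e⁻¹) = 0 := by
        have h5 := mul_inv_cancel₀ he'
        have h6 := mul_inv_cancel₀ he0
        linear_combination e ^ (2 ^ f) * h4 - h5 + h6
      rcases mul_eq_zero.1 this with h | h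
      · left; exact sub_eq_zero.1 h
      · right; exact sub_eq_zero.1 h
    push Not at hfix
    rw [hset, if_neg hfix.1, if_neg hfix.2]
    rfl

/-- Double count of the pairs `(A, e)` with `e ≠ 1` an eigenvalue of `A` in `F` and `e ^ n = 1`:
by `card_eigenvalues` every `A` of exponent `n` other than `1` contributes two, and
`card_SL_eigenvalue` gives the contribution of every `e`. -/
lemma card_SL_torsion {K F : Type*} [Field K] [Fintype K] [DecidableEq K] [Field F] [Fintype F]
    [DecidableEq F] [CharP F 2] (φ : K →+* F) {f : ℕ} (hK : Fintype.card K = 2 ^ f)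
    {n : ℕ} (hn : n ∣ Fintype.card F - 1) (hodd : Odd n)  :
    2 * #{A : Matrix.SpecialLinearGroup (Fin 2) K | A ≠ 1 ∧ A ^ n = 1} =
      (n.gcd (2 ^ f - 1) - 1) * (2 ^ f * (2 ^ f + 1))
        + (n.gcd (2 ^ f + 1) - 1) * (2 ^ f * (2 ^ f - 1)) := by
  have hn0 : n ≠ 0 := by rintro rfl; simp at hodd
  have hinj : Function.Injective (Matrix.SpecialLinearGroup.map (n := Fin 2) φ) := by
    intro A B h
    apply Subtype.ext
    ext i j
    have := congrArg (fun M : Matrix.SpecialLinearGroup (Fin 2) F => M i j) h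
    exact φ.injective this
  have key : ∀ A : Matrix.SpecialLinearGroup (Fin 2) K,
      #{e : F | e ^ n = 1 ∧ e ≠ 1 ∧ e ^ 2 + φ (A 0 0 + A 1 1) * e + 1 = 0}
      = if A ≠ 1 ∧ A ^ n = 1 then 2 else 0 := by
    intro A
    have h := card_eigenvalues hn hodd (Matrix.SpecialLinearGroup.map (n := Fin 2) φ A)
    simp only [← map_pow, ne_eq, map_eq_one_iff _ hinj] at h
    simp only [ne_eq]
    rw [← h]
    simp
  have h1 : 2 * #{A : Matrix.SpecialLinearGroup (Fin 2) K | A ≠ 1 ∧ A ^ n = 1}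
      = ∑ A : Matrix.SpecialLinearGroup (Fin 2) K,
        #{e : F | e ^ n = 1 ∧ e ≠ 1 ∧ e ^ 2 + φ (A 0 0 + A 1 1) * e + 1 = 0} := by
    simp only [key]
    rw [← Finset.sum_filter, Finset.sum_const, smul_eq_mul, mul_comm]
  have h2 : ∑ A : Matrix.SpecialLinearGroup (Fin 2) K,
        #{e : F | e ^ n = 1 ∧ e ≠ 1 ∧ e ^ 2 + φ (A 0 0 + A 1 1) * e + 1 = 0}
      = ∑ e ∈ ({e : F | e ^ n = 1 ∧ e ≠ 1} : Finset F),
        #{A : Matrix.SpecialLinearGroup (Fin 2) K | e ^ 2 + φ (A 0 0 + A 1 1) * e + 1 = 0} := by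
    simp only [Finset.card_filter]
    rw [Finset.sum_comm, Finset.sum_filter]
    refine Finset.sum_congr rfl fun e _ => ?_
    by_cases h : e ^ n = 1 ∧ e ≠ 1
    · simp [h]
    · rw [if_neg h]
      apply Finset.sum_eq_zero
      intro A _
      rw [if_neg]
      tauto
  have hcount : ∀ m : ℕ, #{e : F | (e ^ n = 1 ∧ e ≠ 1) ∧ e ^ m = 1} = n.gcd m - 1 := by
    intro m
    have : ({e : F | (e ^ n = 1 ∧ e ≠ 1) ∧ e ^ m = 1} : Finset F)
        = ({e : F | e ^ (n.gcd m) = 1} : Finset F).erase 1 := by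
      ext e
      simp only [mem_filter, mem_univ, true_and, mem_erase]
      rw [pow_gcd_eq_one]
      tauto
    rw [this, Finset.card_erase_of_mem (by simp), card_rootsOfUnity_field
      ((Nat.gcd_dvd_left _ _).trans hn)]
  rw [h1, h2, Finset.sum_congr rfl (fun e he => by
    simp only [mem_filter, mem_univ, true_and] at he
    exact card_SL_eigenvalue φ hK (e := e) (by rintro rfl; simp [hn0] at he) he.2)]
  rw [Finset.sum_add_distrib, ← Finset.sum_filter, ← Finset.sum_filter, Finset.sum_const,
    Finset.sum_const, Finset.filter_filter, Finset.filter_filter, hcount, hcount, smul_eq_mul, smul_eq_mul]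

lemma card_SL_involutions {K : Type*} [Field K] [Fintype K] [DecidableEq K] [CharP K 2] :
    #{A : Matrix.SpecialLinearGroup (Fin 2) K | A ≠ 1 ∧ A 0 0 + A 1 1 = 0}
      = Fintype.card K ^ 2 - 1 := by
  have h2K : (2 : K) = 0 := CharTwo.two_eq_zero
  have h : ({A : Matrix.SpecialLinearGroup (Fin 2) K | A ≠ 1 ∧ A 0 0 + A 1 1 = 0} : Finset _)
      = ({A : Matrix.SpecialLinearGroup (Fin 2) K | A 0 0 + A 1 1 = 0} : Finset _).erase 1 := by
    ext A; simp
  have hr : ({x : K | x ^ 2 - 0 * x + 1 = 0} : Finset K) = {1} := by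
    ext x
    simp only [mem_filter, mem_univ, true_and, mem_singleton]
    constructor
    · intro h
      have : (x - 1) ^ 2 = 0 := by linear_combination h - x * h2K
      exact sub_eq_zero.1 (pow_eq_zero_iff (by norm_num) |>.1 this)
    · rintro rfl; linear_combination h2K
  have hc : 1 < Fintype.card K := Fintype.one_lt_card
  rw [h, Finset.card_erase_of_mem, card_SL_trace, hr, Finset.card_singleton]
  · congr 1
    zify [hc.le]; ring
  · simp; linear_combination h2K

/-! ### Fixed points of unitary `2 × 2` matrices -/

section
set_option linter.unusedSectionVars false
variable {F : Type*} [Field F] [Fintype F] {q : ℕ}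

/-- The conjugation `x ↦ x ^ q` of `F` over `𝔽_q` is an involution. -/
lemma bar_bar (hF : Fintype.card F = q ^ 2) (x : F) : (x ^ q) ^ q = x := by
  rw [← pow_mul, ← pow_two, ← hF, FiniteField.pow_card]

lemma one_lt_of_card (hF : Fintype.card F = q ^ 2) : 1 < q := by
  have hcard : 1 < Fintype.card F := Fintype.one_lt_card
  by_contra hlt
  interval_cases q <;> simp_all

lemma dvd_card_sub_one (hF : Fintype.card F = q ^ 2) :
    (q - 1) ∣ Fintype.card F - 1 ∧ (q + 1) ∣ Fintype.card F - 1 := by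
  have := Nat.sq_sub_sq q 1
  rw [one_pow] at this
  rw [hF, this]
  exact ⟨dvd_mul_left _ _, dvd_mul_right _ _⟩

variable [DecidableEq F] [CharP F 2]

/-- The number of affine points of the Hermitian curve. -/
lemma card_affine (hF : Fintype.card F = q ^ 2)
    (hadd : ∀ x y : F, (x + y) ^ q = x ^ q + y ^ q) :
    #{p : F × F | p.1 ^ (q + 1) - p.2 ^ (q + 1) = 1} = q ^ 3 - q := by
  have hq := one_lt_of_card hF
  have h1 : #{p : F × F | p.1 ^ (q + 1) - p.2 ^ (q + 1) = 1}
      = ∑ y : F, #{x : F | x ^ (q + 1) = 1 + y ^ (q + 1)} := by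
    rw [Finset.card_filter, Fintype.sum_prod_type_right]
    refine Finset.sum_congr rfl fun y _ => ?_
    rw [← Finset.card_filter]
    simp only [sub_eq_iff_eq_add]
  have h2 : ∀ y : F, #{x : F | x ^ (q + 1) = 1 + y ^ (q + 1)}
      = if y ^ (q + 1) = 1 then 1 else q + 1 := by
    intro y
    split_ifs with hy
    · rw [Finset.card_eq_one]
      refine ⟨0, ?_⟩
      ext x
      simp [hy, CharTwo.add_self_eq_zero]
    · apply card_norm_eq hF
      · intro h; apply hy
        rw [← CharTwo.add_eq_zero, add_comm]; exact h
      · rw [hadd, one_pow, pow_succ, mul_pow, bar_bar hF]; ring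
  rw [h1, Finset.sum_congr rfl fun y _ => h2 y, Finset.sum_ite, Finset.sum_const, Finset.sum_const,
    card_rootsOfUnity_field (dvd_card_sub_one hF).2]
  have h3 := Finset.card_filter_add_card_filter_not (s := (univ : Finset F)) (fun y : F => y ^ (q + 1) = 1)
  rw [card_rootsOfUnity_field (dvd_card_sub_one hF).2, Finset.card_univ, hF] at h3
  have h4 : #{y : F | ¬ y ^ (q + 1) = 1} = q ^ 2 - (q + 1) := by omega
  rw [h4]
  have h5 : q + 1 ≤ q ^ 2 := by nlinarith
  have h6 : q ≤ q ^ 3 := Nat.le_self_pow (by norm_num) q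
  simp only [smul_eq_mul]
  zify [h5, h6]; ring

/-- The points `(x : 1 : 0)` of the curve fixed by the matrix `[[a, c ^ q], [c, a ^ q]] ≠ 1`
correspond to its eigenvalues in `𝔽_q`. For `c ≠ 0` the eigenvalue of the eigenvector `(x, 1)` is
`l = c * x + a ^ q`, and `l ∈ 𝔽_q` is equivalent to `x ^ (q + 1) = 1`. For `c = 0` the matrix is
`diag(a, a ^ q)` with `a ^ q = a⁻¹ ≠ a`, and both sides are zero. -/
lemma card_fix_infinity (hF : Fintype.card F = q ^ 2)
    (hadd : ∀ x y : F, (x + y) ^ q = x ^ q + y ^ q) {a c : F}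
    (hac : a ^ (q + 1) - c ^ (q + 1) = 1) (hne : ¬ (a = 1 ∧ c = 0)) :
    #{x : F | x ^ (q + 1) = 1 ∧ a * x + c ^ q = x * (c * x + a ^ q)}
      = #{l : F | l ^ (q - 1) = 1 ∧ l ^ 2 + (a + a ^ q) * l + 1 = 0} := by
  have h2 : (2 : F) = 0 := CharTwo.two_eq_zero
  have hq := one_lt_of_card hF
  have hpow : ∀ x : F, x ≠ 0 → (x ^ (q - 1) = 1 ↔ x ^ q = x) := by
    intro x hx
    obtain ⟨m, rfl⟩ : ∃ m, q = m + 1 := ⟨q - 1, by omega⟩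
    simp only [Nat.add_sub_cancel, pow_succ]
    constructor
    · intro h; rw [h, one_mul]
    · intro h; exact mul_right_cancel₀ hx (by rw [h, one_mul])
  rw [pow_succ, pow_succ] at hac
  by_cases hc : c = 0
  · subst hc
    have hq0 : q ≠ 0 := by omega
    simp only [mul_zero, sub_zero, zero_pow hq0, add_zero, zero_mul, zero_add] at hac ⊢
    have ha0 : a ≠ 0 := by rintro rfl; simp [hq0] at hac
    have ha1 : a ≠ 1 := fun h => hne ⟨h, rfl⟩
    have haa : a ≠ a ^ q := by
      intro h
      rw [← h] at hac
      apply ha1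
      have : (a - 1) ^ 2 = 0 := by linear_combination hac + (1 - a) * h2
      exact sub_eq_zero.1 (pow_eq_zero_iff (by norm_num) |>.1 this)
    rw [Finset.card_eq_zero.2, Finset.card_eq_zero.2]
    · ext l
      simp only [mem_filter, mem_univ, true_and, notMem_empty, iff_false, not_and]
      intro hl h
      have hl0 : l ≠ 0 := by rintro rfl; simp at h
      rw [hpow l hl0] at hl
      have : (l - a) * (l - a ^ q) = 0 := by linear_combination h + hac - (a + a ^ q) * l * h2
      rcases mul_eq_zero.1 this with h | h
      · rw [sub_eq_zero] at h; subst h; exact haa hl.symm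
      · rw [sub_eq_zero] at h
        apply haa
        rw [← h, ← hl, h, bar_bar hF]
    · ext x
      simp only [mem_filter, mem_univ, true_and, notMem_empty, iff_false, not_and]
      intro hx h
      have hx0 : x ≠ 0 := by rintro rfl; simp at hx
      rw [mul_comm] at h
      exact haa (mul_left_cancel₀ hx0 h)
  · refine Finset.card_bij' (fun x _ => c * x + a ^ q) (fun l _ => (l + a ^ q) / c) ?_ ?_ ?_ ?_
    · intro x hx
      simp only [mem_filter, mem_univ, true_and] at hx ⊢
      obtain ⟨hx, h⟩ := hx
      have hx0 : x ≠ 0 := by rintro rfl; simp at hx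
      rw [pow_succ] at hx
      have hl : (c * x + a ^ q) ^ 2 + (a + a ^ q) * (c * x + a ^ q) + 1 = 0 := by
        linear_combination (-c) * h  + (c * x * a ^ q + a * c * x + (a ^ q)^2 + a ^ q * a) * h2 - hac
      have hl0 : c * x + a ^ q ≠ 0 := by intro h0; rw [h0] at hl; simp at hl
      refine ⟨?_, hl⟩
      rw [hpow _ hl0, hadd, mul_pow, bar_bar hF]
      apply mul_right_cancel₀ hx0
      linear_combination c ^ q * hx + h
    · intro l hl
      simp only [mem_filter, mem_univ, true_and] at hl ⊢
      obtain ⟨hl, h⟩ := hl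
      have hl0 : l ≠ 0 := by rintro rfl; simp at h
      rw [hpow _ hl0] at hl
      have hcq : c ^ q ≠ 0 := pow_ne_zero _ hc
      constructor
      · rw [pow_succ, div_pow, hadd, bar_bar hF, hl]
        field_simp
        linear_combination h - hac + (-1 + a * a ^ q - c * c^q) * h2
      · field_simp
        linear_combination -h - hac + (-a ^ q * l - (a ^ q) ^ 2 + a * a^q + a * l) * h2
    · intro x hx
      field_simp
      linear_combination a ^ q * h2
    · intro l hl
      field_simp
      linear_combination a ^ q * h2

/-- The value `1` is a root of the characteristic polynomial exactly when the trace vanishes. -/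
lemma card_split_one (t : F) (n : ℕ) :
    #{l : F | l ^ n = 1 ∧ l ^ 2 + t * l + 1 = 0} = (if t = 0 then 1 else 0) +
      #{l : F | l ^ n = 1 ∧ l ≠ 1 ∧ l ^ 2 + t * l + 1 = 0} := by
  have h2 : (2 : F) = 0 := CharTwo.two_eq_zero
  by_cases ht : t = 0
  · have : ({l : F | l ^ n = 1 ∧ l ≠ 1 ∧ l ^ 2 + t * l + 1 = 0} : Finset F)
        = ({l : F | l ^ n = 1 ∧ l ^ 2 + t * l + 1 = 0} : Finset F).erase 1 := by
      ext l; simp; tauto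
    have hm : (1 : F) ∈ ({l : F | l ^ n = 1 ∧ l ^ 2 + t * l + 1 = 0} : Finset F) := by
      simp [ht]; linear_combination h2
    rw [this, if_pos ht, Finset.card_erase_of_mem hm]
    have := Finset.card_pos.2 ⟨_, hm⟩
    omega
  · rw [if_neg ht, zero_add]
    congr 1
    ext l
    simp only [mem_filter, mem_univ, true_and]
    constructor
    · rintro ⟨h1, h3⟩
      refine ⟨h1, ?_, h3⟩
      rintro rfl
      apply ht; linear_combination h3 - h2
    · tauto

/-- The only matrix `[[a, c ^ q], [c, a ^ q]]` fixing a vector of norm one is the identity. -/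
lemma card_fix_affine_one (hF : Fintype.card F = q ^ 2) (hadd : ∀ x y : F, (x + y) ^ q = x ^ q + y ^ q)
     {a c : F} (hne : ¬ (a = 1 ∧ c = 0)) :
    #{p : F × F | p.1 ^ (q + 1) - p.2 ^ (q + 1) = 1 ∧
      a * p.1 + c ^ q * p.2 = p.1 ∧ c * p.1 + a ^ q * p.2 = p.2} = 0 := by
  rw [Finset.card_eq_zero]
  ext ⟨x, y⟩
  simp only [mem_filter, mem_univ, true_and, notMem_empty, iff_false]
  rintro ⟨hxy, h1, h3⟩
  apply hne
  have h4 := congrArg (· ^ q) h3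
  simp only [hadd, mul_pow, bar_bar hF] at h4
  rw [pow_succ, pow_succ] at hxy
  have ha : a = 1 := by
    linear_combination (1 - a) * hxy + x ^ q * h1 - y * h4
  refine ⟨ha, ?_⟩
  have : c ^ q = 0 := by
    linear_combination (-c ^ q) * hxy - y ^ q * h1 + x * h4
  exact pow_eq_zero_iff (by have := one_lt_of_card hF; omega) |>.1 this

/-- Eigenvectors of norm one for an eigenvalue `l ≠ 1` of norm one: they are the norm-one vectors of
an anisotropic line. Explicitly, `x` runs over the `q + 1` solutions of
`x ^ (q + 1) = (a + l ^ q) / (l + l ^ q)` and determines `y`; if the right-hand side vanishes, then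
`x = 0` and `y` runs over the elements of norm one. -/
lemma card_fix_affine (hF : Fintype.card F = q ^ 2) (hadd : ∀ x y : F, (x + y) ^ q = x ^ q + y ^ q)
     {a c l : F} (hac : a ^ (q + 1) - c ^ (q + 1) = 1) (hl : l ^ (q + 1) = 1) (hl1 : l ≠ 1) :
    #{p : F × F | p.1 ^ (q + 1) - p.2 ^ (q + 1) = 1 ∧
      a * p.1 + c ^ q * p.2 = l * p.1 ∧ c * p.1 + a ^ q * p.2 = l * p.2} =
      if l ^ 2 + (a + a ^ q) * l + 1 = 0 then q + 1 else 0 := by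
  have h2 : (2 : F) = 0 := CharTwo.two_eq_zero
  have hq := one_lt_of_card hF
  have hl0 : l ≠ 0 := by rintro rfl; simp at hl
  rw [pow_succ, pow_succ] at hac
  rw [pow_succ] at hl
  -- pairing the eigenvector equations with the conjugate vector expresses `a` through the norms
  -- of `x` and `y`, as in the spectral decomposition with eigenvalues `l` and `l ^ q`
  have nec : ∀ x y : F, x ^ (q + 1) - y ^ (q + 1) = 1 → a * x + c ^ q * y = l * x →
      c * x + a ^ q * y = l * y →
        l * (x ^ q * x) - l ^ q * (y ^ q * y) = a ∧ l ^ q * (x ^ q * x) - l * (y ^ q * y) = a ^ q := by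
    intro x y hxy h1 h3
    have h4 := congrArg (· ^ q) h3
    have h5 := congrArg (· ^ q) h1
    simp only [hadd, mul_pow, bar_bar hF] at h4 h5
    rw [pow_succ, pow_succ] at hxy
    constructor
    · linear_combination a * hxy - x ^ q * h1 + y * h4
    · linear_combination a ^ q * hxy - x * h5 + y ^ q * h3
  split_ifs with hchar
  · have ht : a + a ^ q = l + l ^ q := by
      apply mul_right_cancel₀ hl0
      linear_combination hchar - hl - (l ^ 2 + 1) * h2
    have hm0 : l + l ^ q ≠ 0 := by
      intro h
      apply hl1
      have : (l - 1) ^ 2 = 0 := by linear_combination l * h - hl - l * h2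
      exact sub_eq_zero.1 (pow_eq_zero_iff (by norm_num) |>.1 this)
    have hmq : (l + l ^ q) ^ q = l + l ^ q := by rw [hadd, bar_bar hF, add_comm]
    by_cases hn : a + l ^ q = 0
    · have hal : a = l ^ q := by linear_combination hn - l ^ q * h2
      have haq : a ^ q = l := by rw [hal, bar_bar hF]
      have hc : c = 0 := by
        rw [haq, hal] at hac
        have : c ^ q * c = 0 := by linear_combination -hac + hl
        rcases mul_eq_zero.1 this with h | h
        · exact pow_eq_zero_iff (by omega) |>.1 h
        · exact h
      refine Eq.trans ?_ (card_norm_eq hF (b := 1) one_ne_zero (one_pow q))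
      subst hc
      refine Finset.card_bij (fun p _ => p.2) ?_ ?_ ?_
      · rintro ⟨x, y⟩ hp
        simp only [mem_filter, mem_univ, true_and] at hp ⊢
        obtain ⟨hxy, h1, h3⟩ := hp
        have hx : x = 0 := by
          have : (l + l ^ q) * x = 0 := by
            rw [zero_pow (by omega)] at h1
            linear_combination h1 + l * x * h2 - x * hal
          exact (mul_eq_zero.1 this).resolve_left hm0
        rw [hx, zero_pow (by omega)] at hxy
        linear_combination -hxy - h2
      · rintro ⟨x, y⟩ hp ⟨x', y'⟩ hp' h
        simp only [mem_filter, mem_univ, true_and] at hp hp' h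
        have aux : ∀ x : F, a * x + 0 ^ q * y = l * x → x = 0 := by
          intro x h1
          have : (l + l ^ q) * x = 0 := by
            rw [zero_pow (by omega)] at h1
            linear_combination h1 + l * x * h2 - x * hal
          exact (mul_eq_zero.1 this).resolve_left hm0
        rw [aux x hp.2.1, aux x' (by rw [h]; exact hp'.2.1), h]
      · intro y hy
        simp only [mem_filter, mem_univ, true_and] at hy
        refine ⟨(0, y), ?_, rfl⟩
        simp only [mem_filter, mem_univ, true_and]
        refine ⟨?_, ?_, ?_⟩
        · rw [hy, zero_pow (by omega)]; linear_combination -h2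
        · rw [zero_pow (by omega)]; ring
        · rw [haq]; ring
    · have hn1 : (a + l ^ q) / (l + l ^ q) ≠ 0 := div_ne_zero hn hm0
      have hn2 : ((a + l ^ q) / (l + l ^ q)) ^ q = (a + l ^ q) / (l + l ^ q) := by
        rw [div_pow, hmq, hadd, bar_bar hF]
        congr 1
        linear_combination ht + (l - a) * h2
      refine Eq.trans ?_ (card_norm_eq hF hn1 hn2)
      have hNx : ∀ x y : F, x ^ (q + 1) - y ^ (q + 1) = 1 → a * x + c ^ q * y = l * x →
          c * x + a ^ q * y = l * y → x ^ (q + 1) = (a + l ^ q) / (l + l ^ q) := by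
        intro x y hxy h1 h3
        obtain ⟨h4, -⟩ := nec x y hxy h1 h3
        rw [eq_div_iff hm0]
        rw [pow_succ, pow_succ] at *
        linear_combination h4 - l ^ q * hxy + l ^ q * (x ^ q * x - 1) * h2
      have hy : ∀ x y : F, x ^ (q + 1) - y ^ (q + 1) = 1 → a * x + c ^ q * y = l * x →
          c * x + a ^ q * y = l * y → y = c / ((l + l ^ q) * x ^ q) := by
        intro x y hxy h1 h3
        have h4 := hNx x y hxy h1 h3
        have hx0 : x ≠ 0 := by
          rintro rfl
          rw [zero_pow (by omega)] at h4
          exact hn1 h4.symm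
        rw [eq_div_iff hm0, pow_succ] at h4
        rw [eq_div_iff (mul_ne_zero hm0 (pow_ne_zero _ hx0))]
        apply mul_right_cancel₀ hx0
        linear_combination y * h4 - h3 + y * ht + y * l ^ q * h2
      refine Finset.card_bij' (fun p _ => p.1) (fun x _ => (x, c / ((l + l ^ q) * x ^ q))) ?_ ?_ ?_ ?_
      · rintro ⟨x, y⟩ hp
        simp only [mem_filter, mem_univ, true_and] at hp ⊢
        exact hNx x y hp.1 hp.2.1 hp.2.2
      · intro x hx
        simp only [mem_filter, mem_univ, true_and] at hx ⊢
        have hx0 : x ≠ 0 := by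
          rintro rfl
          rw [zero_pow (by omega)] at hx
          exact hn1 hx.symm
        rw [eq_div_iff hm0, pow_succ] at hx
        have hxq0 : x ^ q ≠ 0 := pow_ne_zero _ hx0
        refine ⟨?_, ?_, ?_⟩
        · rw [pow_succ, pow_succ, div_pow, mul_pow, hmq, bar_bar hF]
          generalize a ^ q = A at *
          generalize c ^ q = C at *
          generalize l ^ q = L at *
          generalize x ^ q = X at *
          have hA : A = l + L - a := by linear_combination ht
          subst hA
          have key : ((l + L) * (X * x)) ^ 2 - C * c = (l + L) * ((l + L) * (X * x)) := by
            rw [mul_comm, hx]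
            linear_combination hac - hl + (a ^ 2 - l * a) * h2
          field_simp
          linear_combination key
        · generalize a ^ q = A at *
          generalize c ^ q = C at *
          generalize l ^ q = L at *
          generalize x ^ q = X at *
          field_simp
          have hA : A = l + L - a := by linear_combination ht
          subst hA
          linear_combination (a - l) * hx - hac - hl + (a * L - 1) * h2
        · generalize a ^ q = A at *
          generalize c ^ q = C at *
          generalize l ^ q = L at *
          generalize x ^ q = X at *
          field_simp
          have hA : A = l + L - a := by linear_combination ht
          subst hA
          linear_combination c * hx + c * L * h2
      · rintro ⟨x, y⟩ hp
        simp only [mem_filter, mem_univ, true_and] at hp ⊢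
        rw [← hy x y hp.1 hp.2.1 hp.2.2]
      · intro x _
        rfl
  · rw [Finset.card_eq_zero]
    ext ⟨x, y⟩
    simp only [mem_filter, mem_univ, true_and, notMem_empty, iff_false]
    rintro ⟨hxy, h1, h3⟩
    obtain ⟨h4, h5⟩ := nec x y hxy h1 h3
    apply hchar
    rw [pow_succ, pow_succ] at hxy
    linear_combination (-l) * h4 - l * h5 + (l ^ 2 + l ^ q * l) * hxy + hl + (l ^ 2 + 1) * h2

end

/-! ### The projective action and Burnside's lemma -/

lemma glAct_mk {F : Type*} [Field F] (M : GL (Fin 3) F) (v : Fin 3 → F) (hv : v ≠ 0)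
    (hv' : (M : Matrix (Fin 3) (Fin 3) F).mulVec v ≠ 0) :
    glAct M (Projectivization.mk F v hv)
      = Projectivization.mk F ((M : Matrix (Fin 3) (Fin 3) F).mulVec v) hv' := by
  unfold glAct
  rw [Projectivization.map_mk]
  rfl

lemma mulVec_ne_zero {F : Type*} [Field F] (M : GL (Fin 3) F) {v : Fin 3 → F} (hv : v ≠ 0) :
    (M : Matrix (Fin 3) (Fin 3) F).mulVec v ≠ 0 := by
  intro h
  apply hv
  have := congrArg ((M⁻¹ : GL (Fin 3) F) : Matrix (Fin 3) (Fin 3) F).mulVec h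
  rwa [Matrix.mulVec_mulVec, ← Units.val_mul, inv_mul_cancel, Units.val_one, Matrix.one_mulVec,
    Matrix.mulVec_zero] at this

lemma glAct_one {F : Type*} [Field F] (x : Projectivization F (Fin 3 → F)) : glAct 1 x = x := by
  induction x using Projectivization.ind with
  | h v hv =>
    rw [glAct_mk 1 v hv (mulVec_ne_zero 1 hv)]
    congr 1
    simp

lemma glAct_mul {F : Type*} [Field F] (M N : GL (Fin 3) F) (x : Projectivization F (Fin 3 → F)) :
    glAct (M * N) x = glAct M (glAct N x) := by
  induction x using Projectivization.ind with
  | h v hv =>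
    rw [glAct_mk _ v hv (mulVec_ne_zero _ hv), glAct_mk _ v hv (mulVec_ne_zero _ hv),
      glAct_mk _ _ _ (mulVec_ne_zero _ (mulVec_ne_zero _ hv))]
    congr 1
    simp [Matrix.mulVec_mulVec]

lemma mk_mem_hermitianPts {F : Type*} [Field F] {q : ℕ} (v : Fin 3 → F) (hv : v ≠ 0) :
    Projectivization.mk F v hv ∈ hermitianPts q F ↔ v 1 ^ (q + 1) = v 0 ^ (q + 1) - v 2 ^ (q + 1) := by
  obtain ⟨a, ha⟩ := Projectivization.exists_smul_eq_mk_rep F v hv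
  unfold hermitianPts
  rw [Set.mem_ofPred_eq, ← ha]
  have ha0 : (a : F) ^ (q + 1) ≠ 0 := pow_ne_zero _ a.ne_zero
  simp only [Pi.smul_apply, Units.smul_def, smul_eq_mul, mul_pow, ← mul_sub]
  exact mul_right_inj' ha0

/-- `M_ℓ` preserves the Hermitian curve. -/
lemma glAct_mem {F : Type*} [Field F] [Fintype F] {q : ℕ} (hF : Fintype.card F = q ^ 2)
    (hadd : ∀ x y : F, (x + y) ^ q = x ^ q + y ^ q) {M : GL (Fin 3) F} (hM : M ∈ MlSet q F)
    {x : Projectivization F (Fin 3 → F)} (hx : x ∈ hermitianPts q F) :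
    glAct M x ∈ hermitianPts q F := by
  induction x using Projectivization.ind with
  | h v hv =>
    rw [mk_mem_hermitianPts] at hx
    rw [glAct_mk _ v hv (mulVec_ne_zero _ hv), mk_mem_hermitianPts]
    obtain ⟨a, c, τ, hac, hτ, hM⟩ := hM
    rw [hM]
    simp only [Matrix.mulVec, dotProduct, Fin.sum_univ_three, Matrix.of_apply, Matrix.cons_val',
      Matrix.cons_val_zero, Matrix.cons_val_one, Matrix.cons_val_fin_one, Matrix.cons_val,
      zero_mul, add_zero, zero_add, one_mul]
    rw [pow_succ] at hτ hac
    simp only [pow_succ, hadd, mul_pow, bar_bar hF] at *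
    linear_combination (a ^ q * a - c ^ q * c) * hx +
      (-(a ^ q * a - c ^ q * c) * (v 1 ^ q * v 1)) * hτ * (-1)
       - (v 2 ^ q * v 2) * hac

/-- Burnside's lemma for `numOrbits`, which counts the orbits as sets of points. -/
lemma burnside {F : Type*} [Field F] [Fintype F] (L : Subgroup (GL (Fin 3) F)) [Fintype L]
    (O : Set (Projectivization F (Fin 3 → F)))
    (hO : ∀ g ∈ L, ∀ x ∈ O, glAct g x ∈ O) :
    ∑ g : L, Nat.card {x : O // glAct (g : GL (Fin 3) F) (x : Projectivization F (Fin 3 → F)) = x}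
      = numOrbits L O * Fintype.card L := by
  classical
  let act : MulAction L O :=
    { smul := fun g x => ⟨glAct g.1 x.1, hO g.1 g.2 x.1 x.2⟩
      one_smul := fun x => Subtype.ext (glAct_one x.1)
      mul_smul := fun g k x => Subtype.ext (glAct_mul g.1 k.1 x.1) }
  have hsm : ∀ (g : L) (x : O), ((g • x : O) : Projectivization F (Fin 3 → F)) = glAct g.1 x.1 :=
    fun _ _ => rfl
  have : Finite (Projectivization F (Fin 3 → F)) := by
    unfold Projectivization; infer_instance
  let : Fintype O := Fintype.ofFinite _
  let : ∀ g : L, Fintype (MulAction.fixedBy O g) := fun g => Fintype.ofFinite _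
  let : Fintype (Quotient (MulAction.orbitRel L O)) := Fintype.ofFinite _
  have hB := MulAction.sum_card_fixedBy_eq_card_orbits_mul_card_group L O
  have h1 : numOrbits L O = Fintype.card (Quotient (MulAction.orbitRel L O)) := by
    unfold numOrbits
    rw [← Nat.card_eq_fintype_card]
    symm
    refine Nat.card_congr (Equiv.ofBijective (Quotient.lift (fun x : O =>
      (⟨{y | ∃ g ∈ L, glAct g x.1 = y}, x.1, x.2, rfl⟩ :
        ((fun x => {y | ∃ g ∈ L, glAct g x = y}) '' O :
          Set (Set (Projectivization F (Fin 3 → F)))))) ?_) ⟨?_, ?_⟩)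
    · rintro x y ⟨g, rfl⟩
      apply Subtype.ext
      ext z
      constructor
      · rintro ⟨k, hk, rfl⟩
        refine ⟨k * g.1, L.mul_mem hk g.2, ?_⟩
        rw [glAct_mul]; rfl
      · rintro ⟨k, hk, rfl⟩
        refine ⟨k * g.1⁻¹, L.mul_mem hk (L.inv_mem g.2), ?_⟩
        change glAct (k * g.1⁻¹) (glAct g.1 y.1) = _
        rw [← glAct_mul, inv_mul_cancel_right]
    · intro x y
      refine Quotient.inductionOn₂ x y ?_
      intro x y h
      apply Quotient.sound
      have h := congrArg Subtype.val h
      have hx : x.1 ∈ {z | ∃ g ∈ L, glAct g x.1 = z} := ⟨1, L.one_mem, glAct_one _⟩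
      have h' : {z | ∃ g ∈ L, glAct g x.1 = z} = {z | ∃ g ∈ L, glAct g y.1 = z} := h
      rw [h'] at hx
      obtain ⟨g, hg, hgx⟩ := hx
      exact ⟨⟨g, hg⟩, Subtype.ext hgx⟩
    · rintro ⟨_, x, hx, rfl⟩
      exact ⟨Quotient.mk _ ⟨x, hx⟩, rfl⟩
  rw [h1, ← hB]
  refine Finset.sum_congr rfl fun g _ => ?_
  rw [← Nat.card_eq_fintype_card]
  refine Nat.card_congr (Equiv.subtypeEquivRight fun x => ?_)
  rw [MulAction.mem_fixedBy, Subtype.ext_iff]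
  rfl

lemma vec_one_ne {F : Type*} [Field F] (x y : F) : (![x, y, 1] : Fin 3 → F) ≠ 0 := by
  intro h; simpa using congrFun h 2

lemma vec_inf_ne {F : Type*} [Field F] (x : F) : (![x, 1, 0] : Fin 3 → F) ≠ 0 := by
  intro h; simpa using congrFun h 1

/-- Fixed points on the curve of a block matrix: the affine ones, written `(x : y : 1)`, and those at
infinity, written `(x : 1 : 0)`. There is no point `(1 : 0 : 0)` on the curve. -/
lemma card_fix {F : Type*} [Field F] [Fintype F] [DecidableEq F] {q : ℕ}
    {M : GL (Fin 3) F} {a b c d : F}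
    (hM : (M : Matrix (Fin 3) (Fin 3) F) = !![a, b, 0; c, d, 0; 0, 0, 1]) :
    Nat.card {x : hermitianPts q F // glAct M (x : Projectivization F (Fin 3 → F)) = x} =
      #{p : F × F | p.1 ^ (q + 1) - p.2 ^ (q + 1) = 1 ∧ a * p.1 + b * p.2 = p.1 ∧ c * p.1 + d * p.2 = p.2}
      + #{x : F | x ^ (q + 1) = 1 ∧ a * x + b = x * (c * x + d)} := by
  have hA : ∀ x y : F, glAct M (Projectivization.mk F _ (vec_one_ne x y)) =
      Projectivization.mk F _ (vec_one_ne x y) ↔ a * x + b * y = x ∧ c * x + d * y = y := by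
    intro x y
    rw [glAct_mk _ _ _ (mulVec_ne_zero _ (vec_one_ne x y)), Projectivization.mk_eq_mk_iff', hM]
    constructor
    · rintro ⟨k, hk⟩
      have h0 := congrFun hk 0
      have h1 := congrFun hk 1
      have h2 := congrFun hk 2
      simp [Matrix.mulVec, dotProduct, Fin.sum_univ_three] at h0 h1 h2
      rw [h2] at h0 h1
      exact ⟨by linear_combination -h0, by linear_combination -h1⟩
    · rintro ⟨h0, h1⟩
      refine ⟨1, ?_⟩
      ext i
      fin_cases i <;> simp [Matrix.mulVec, dotProduct, Fin.sum_univ_three, h0, h1]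
  have hB : ∀ x : F, glAct M (Projectivization.mk F _ (vec_inf_ne x)) =
      Projectivization.mk F _ (vec_inf_ne x) ↔ a * x + b = x * (c * x + d) := by
    intro x
    rw [glAct_mk _ _ _ (mulVec_ne_zero _ (vec_inf_ne x)), Projectivization.mk_eq_mk_iff', hM]
    constructor
    · rintro ⟨k, hk⟩
      have h0 := congrFun hk 0
      have h1 := congrFun hk 1
      simp [Matrix.mulVec, dotProduct, Fin.sum_univ_three] at h0 h1
      rw [← h1, ← h0]; ring
    · rintro h0
      refine ⟨c * x + d, ?_⟩
      ext i
      fin_cases i <;> simp [Matrix.mulVec, dotProduct, Fin.sum_univ_three, h0]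
      ring
  set PA := {p : F × F // p.1 ^ (q + 1) - p.2 ^ (q + 1) = 1 ∧ a * p.1 + b * p.2 = p.1 ∧
    c * p.1 + d * p.2 = p.2} with hPA
  set PB := {x : F // x ^ (q + 1) = 1 ∧ a * x + b = x * (c * x + d)} with hPB
  have hcard : Nat.card (PA ⊕ PB) =
      #{p : F × F | p.1 ^ (q + 1) - p.2 ^ (q + 1) = 1 ∧ a * p.1 + b * p.2 = p.1 ∧ c * p.1 + d * p.2 = p.2}
      + #{x : F | x ^ (q + 1) = 1 ∧ a * x + b = x * (c * x + d)} := by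
    rw [Nat.card_sum, hPA, hPB, Nat.card_eq_fintype_card, Nat.card_eq_fintype_card,
      Fintype.card_subtype, Fintype.card_subtype]
  rw [← hcard]
  symm
  refine Nat.card_congr (Equiv.ofBijective (Sum.elim
    (fun p : PA => ⟨⟨Projectivization.mk F _ (vec_one_ne p.1.1 p.1.2), ?_⟩, ?_⟩)
    (fun x : PB => ⟨⟨Projectivization.mk F _ (vec_inf_ne x.1), ?_⟩, ?_⟩)) ⟨?_, ?_⟩)
  · rw [mk_mem_hermitianPts]
    have := p.2.1
    simp
    linear_combination -this
  · exact (hA _ _).2 p.2.2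
  · rw [mk_mem_hermitianPts]
    simp [x.2.1]
  · exact (hB _).2 x.2.2
  · rintro (⟨⟨x, y⟩, hp⟩ | ⟨x, hx⟩) (⟨⟨x', y'⟩, hp'⟩ | ⟨x', hx'⟩) h
    all_goals
      simp only [Sum.elim_inl, Sum.elim_inr, Subtype.mk.injEq, Projectivization.mk_eq_mk_iff'] at h
      obtain ⟨k, hk⟩ := h
      have h0 := congrFun hk 0
      have h1 := congrFun hk 1
      have h2 := congrFun hk 2
      simp at h0 h1 h2
    · subst h2; simp at h0 h1; simp [h0, h1]
    · subst h2; simp at h1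
    · subst h1; simp at h0; simp [h0]
  · rintro ⟨⟨z, hz⟩, hfix⟩
    induction z using Projectivization.ind with
    | h v hv =>
      by_cases h2 : v 2 = 0
      · have hz' := (mk_mem_hermitianPts v hv).1 hz
        rw [h2, zero_pow (by omega), sub_zero] at hz'
        have h1 : v 1 ≠ 0 := by
          intro h1
          rw [h1, zero_pow (by omega)] at hz'
          have h0 : v 0 = 0 := pow_eq_zero_iff (by omega) |>.1 hz'.symm
          apply hv; ext i; fin_cases i <;> simp [h0, h1, h2]
        have heq : Projectivization.mk F v hv = Projectivization.mk F _ (vec_inf_ne (v 0 / v 1)) := by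
          rw [Projectivization.mk_eq_mk_iff']
          refine ⟨v 1, ?_⟩
          ext i; fin_cases i <;> simp [h2]
          field_simp
        have hf : glAct M (Projectivization.mk F v hv) = Projectivization.mk F v hv := hfix
        rw [heq, hB] at hf
        refine ⟨Sum.inr ⟨v 0 / v 1, ?_, hf⟩, ?_⟩
        · rw [div_pow, hz', div_self]
          rw [← hz']; exact pow_ne_zero _ h1
        · exact Subtype.ext (Subtype.ext heq.symm)
      · have heq : Projectivization.mk F v hv
            = Projectivization.mk F _ (vec_one_ne (v 0 / v 2) (v 1 / v 2)) := by
          rw [Projectivization.mk_eq_mk_iff']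
          refine ⟨v 2, ?_⟩
          ext i; fin_cases i <;> simp <;> field_simp
        have hf : glAct M (Projectivization.mk F v hv) = Projectivization.mk F v hv := hfix
        have hz' := hz
        rw [heq, mk_mem_hermitianPts] at hz'
        rw [heq, hA] at hf
        refine ⟨Sum.inl ⟨(v 0 / v 2, v 1 / v 2), ?_, hf⟩, ?_⟩
        · simp at hz' ⊢
          linear_combination -hz'
        · exact Subtype.ext (Subtype.ext heq.symm)

/-! ### The structure of `S` and of the centre -/

lemma SL_mul_apply {K : Type*} [Field K] (A B : Matrix.SpecialLinearGroup (Fin 2) K)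
    (i j : Fin 2) : (A * B) i j = A i 0 * B 0 j + A i 1 * B 1 j := by
  rw [Matrix.SpecialLinearGroup.coe_mul, Matrix.mul_apply, Fin.sum_univ_two]

/-- In characteristic two the elementary matrices are involutions and they generate `SL(2, K)`, so
every homomorphism from `SL(2, K)` to a commutative monoid whose values are killed by an odd `n` is trivial. -/
lemma hom_trivial {K M : Type*} [Field K] [CharP K 2] [CommMonoid M]
    (χ : Matrix.SpecialLinearGroup (Fin 2) K →* M) {n : ℕ} (hn : Odd n)
    (hχ : ∀ A, χ A ^ n = 1) (A : Matrix.SpecialLinearGroup (Fin 2) K) : χ A = 1 := by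
  have hinv : ∀ B : Matrix.SpecialLinearGroup (Fin 2) K, B * B = 1 → χ B = 1 := by
    intro B hB
    have h2 : χ B ^ 2 = 1 := by rw [pow_two, ← map_mul, hB, map_one]
    obtain ⟨k, rfl⟩ := hn
    have := hχ B
    rwa [pow_succ, pow_mul, h2, one_pow, one_mul] at this
  have h2 : ∀ x : K, x + x = 0 := CharTwo.add_self_eq_zero
  let U : K → Matrix.SpecialLinearGroup (Fin 2) K := fun b => ⟨!![1, b; 0, 1], by simp⟩
  let V : K → Matrix.SpecialLinearGroup (Fin 2) K := fun b => ⟨!![1, 0; b, 1], by simp⟩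
  have hU : ∀ b, χ (U b) = 1 := fun b => hinv _ (by
    ext i j; rw [SL_mul_apply]; fin_cases i <;> fin_cases j <;> simp [U, h2])
  have hV : ∀ b, χ (V b) = 1 := fun b => hinv _ (by
    ext i j; rw [SL_mul_apply]; fin_cases i <;> fin_cases j <;> simp [V, h2])
  have key : ∀ B : Matrix.SpecialLinearGroup (Fin 2) K, B 1 0 ≠ 0 → χ B = 1 := by
    intro B hB
    have hd := B.det_coe
    rw [Matrix.det_fin_two] at hd
    have : B = U ((B 0 0 - 1) / B 1 0) * V (B 1 0) * U ((B 1 1 - 1) / B 1 0) := by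
      ext i j
      rw [SL_mul_apply, SL_mul_apply, SL_mul_apply]
      fin_cases i <;> fin_cases j <;> simp [U, V]
      · field_simp; ring
      · field_simp
        linear_combination -hd
      · field_simp; ring
    rw [this, map_mul, map_mul, hU, hU, hV, one_mul, one_mul]
  by_cases hc : A 1 0 = 0
  · have h1 : (A * V 1) 1 0 ≠ 0 := by
      have hd := A.det_coe
      rw [Matrix.det_fin_two, hc] at hd
      rw [SL_mul_apply, hc]
      simp only [V, zero_mul, zero_add]
      intro h
      replace h : A 1 1 = 0 := by simpa using h
      simp [h] at hd
    have := key _ h1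
    rwa [map_mul, hV, mul_one] at this
  · exact key A hc

/-- A subgroup `S ≅ SL(2, K)` of `M_ℓ` has trivial determinant by `hom_trivial`, since the
determinant of `[a, c, τ]` is `τ` and `q + 1` is odd. The upper left blocks of its elements therefore
form a representation `ρ` in `SL(2, F)`, with values `[[a, c ^ q], [c, a ^ q]]`. -/
lemma exists_rep {F K : Type*} [Field F] [Fintype F] [Field K] [CharP K 2] {q : ℕ}
    (hq : Even q) (S : Subgroup (GL (Fin 3) F)) (hS : (S : Set (GL (Fin 3) F)) ⊆ MlSet q F)
    (e : S ≃* Matrix.SpecialLinearGroup (Fin 2) K) :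
    ∃ ρ : Matrix.SpecialLinearGroup (Fin 2) K →* Matrix.SpecialLinearGroup (Fin 2) F,
      Function.Injective ρ ∧ ∀ A, ρ A 0 1 = (ρ A 1 0) ^ q ∧ ρ A 1 1 = (ρ A 0 0) ^ q ∧
      ((e.symm A : GL (Fin 3) F) : Matrix (Fin 3) (Fin 3) F) =
        !![ρ A 0 0, ρ A 0 1, 0; ρ A 1 0, ρ A 1 1, 0; 0, 0, 1] := by
  let χ : Matrix.SpecialLinearGroup (Fin 2) K →* Fˣ :=
    (Matrix.GeneralLinearGroup.det.comp S.subtype).comp e.symm.toMonoidHom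
  have hdet : ∀ A, ∃ a c : F, a ^ (q + 1) - c ^ (q + 1) = 1 ∧
      ((e.symm A : GL (Fin 3) F) : Matrix (Fin 3) (Fin 3) F) =
        !![a, c ^ q, 0; c, a ^ q, 0; 0, 0, 1] := by
    have hχ' : ∀ A, ∃ a c τ : F, a ^ (q + 1) - c ^ (q + 1) = 1 ∧ τ ^ (q + 1) = 1 ∧
        (χ A : F) = τ ∧ ((e.symm A : GL (Fin 3) F) : Matrix (Fin 3) (Fin 3) F) =
        !![a, τ * c ^ q, 0; c, τ * a ^ q, 0; 0, 0, 1] := by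
      intro A
      obtain ⟨a, c, τ, hac, hτ, hM⟩ := hS (e.symm A).2
      refine ⟨a, c, τ, hac, hτ, ?_, hM⟩
      change ((e.symm A : GL (Fin 3) F) : Matrix (Fin 3) (Fin 3) F).det = τ
      rw [hM, Matrix.det_fin_three]
      simp
      linear_combination τ * hac
    have h1 : ∀ A, χ A = 1 := hom_trivial χ (n := q + 1) hq.add_one (fun A => by
      obtain ⟨a, c, τ, hac, hτ, h, hM⟩ := hχ' A
      ext; push_cast; rw [h, hτ])
    intro A
    obtain ⟨a, c, τ, hac, hτ, h, hM⟩ := hχ' A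
    rw [h1, Units.val_one] at h
    subst h
    exact ⟨a, c, hac, by simpa using hM⟩
  let m : Matrix.SpecialLinearGroup (Fin 2) K → Matrix (Fin 3) (Fin 3) F :=
    fun A => ((e.symm A : GL (Fin 3) F) : Matrix (Fin 3) (Fin 3) F)
  have hm : ∀ A B, m (A * B) = m A * m B := fun A B => by simp [m]
  have hshape : ∀ A, m A = !![m A 0 0, m A 0 1, 0; m A 1 0, m A 1 1, 0; 0, 0, 1] := by
    intro A
    obtain ⟨a, c, hac, hM⟩ := hdet A
    change m A = _ at hM
    rw [hM]; simp
  let ρ : Matrix.SpecialLinearGroup (Fin 2) K →* Matrix.SpecialLinearGroup (Fin 2) F :=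
    { toFun := fun A => ⟨!![m A 0 0, m A 0 1; m A 1 0, m A 1 1], by
        obtain ⟨a, c, hac, hM⟩ := hdet A
        change m A = _ at hM
        rw [hM, Matrix.det_fin_two]; simp
        linear_combination hac⟩
      map_one' := by
        ext i j
        fin_cases i <;> fin_cases j <;> simp [m]
      map_mul' := fun A B => by
        have h := hm A B
        rw [hshape A, hshape B] at h
        ext i j
        refine Eq.trans ?_ (SL_mul_apply _ _ _ _).symm
        fin_cases i <;> fin_cases j <;>
          simp [h, Matrix.mul_apply, Fin.sum_univ_three] }
  refine ⟨ρ, ?_, fun A => ?_⟩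
  · intro A B hAB
    have hAB' : !![m A 0 0, m A 0 1; m A 1 0, m A 1 1] = !![m B 0 0, m B 0 1; m B 1 0, m B 1 1] :=
      congrArg Subtype.val hAB
    have h00 := congrFun (congrFun hAB' 0) 0
    have h01 := congrFun (congrFun hAB' 0) 1
    have h10 := congrFun (congrFun hAB' 1) 0
    have h11 := congrFun (congrFun hAB' 1) 1
    simp at h00 h01 h10 h11
    have : m A = m B := by
      rw [hshape A, hshape B, h00, h01, h10, h11]
    exact e.symm.injective (Subtype.ext (Units.ext this))
  · obtain ⟨a, c, hac, hM⟩ := hdet A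
    change m A = _ at hM
    refine ⟨?_, ?_, hshape A⟩
    · change m A 0 1 = (m A 1 0) ^ q
      rw [hM]; simp
    · change m A 1 1 = (m A 0 0) ^ q
      rw [hM]; simp

/-- The homomorphism `u ↦ diag(u, u, 1)`; the centre of `M_ℓ` is the image of the units with
`u ^ (q + 1) = 1`. -/
noncomputable def zHom (F : Type*) [Field F] : Fˣ →* GL (Fin 3) F where
  toFun u := ⟨Matrix.diagonal ![(u : F), u, 1], Matrix.diagonal ![((u⁻¹ : Fˣ) : F), (u⁻¹ : Fˣ), 1],
    by rw [Matrix.diagonal_mul_diagonal, ← Matrix.diagonal_one]; congr 1; ext i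
       fin_cases i <;> simp,
    by rw [Matrix.diagonal_mul_diagonal, ← Matrix.diagonal_one]; congr 1; ext i
       fin_cases i <;> simp⟩
  map_one' := by
    ext1
    change Matrix.diagonal _ = (1 : Matrix (Fin 3) (Fin 3) F)
    rw [← Matrix.diagonal_one]
    congr 1; ext i
    fin_cases i <;> simp
  map_mul' u v := by
    ext1
    change Matrix.diagonal _ = Matrix.diagonal _ * Matrix.diagonal _
    rw [Matrix.diagonal_mul_diagonal]
    congr 1; ext i
    fin_cases i <;> simp

lemma coe_zHom {F : Type*} [Field F] (u : Fˣ) :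
    ((zHom F u : GL (Fin 3) F) : Matrix (Fin 3) (Fin 3) F)
      = Matrix.diagonal ![(u : F), u, 1] := rfl

lemma zHom_injective {F : Type*} [Field F] : Function.Injective (zHom F) := by
  intro u v h
  have := congrArg (fun M : GL (Fin 3) F => (M : Matrix (Fin 3) (Fin 3) F) 0 0) h
  simp only [coe_zHom] at this
  ext
  simpa using this

/-- As `Fˣ` is cyclic, its only subgroup of order `w` consists of the `w`-th roots of unity; hence
these are the scalars of `L ∩ Z`. -/
lemma zHom_mem {F : Type*} [Field F] [Fintype F] {q w : ℕ}
    (L : Subgroup (GL (Fin 3) F))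
    (hZ : Nat.card ((L : Set (GL (Fin 3) F)) ∩ ZSet q F : Set (GL (Fin 3) F)) = w)
    (hwF : w ∣ Fintype.card F - 1) (u : Fˣ) :
    (u : F) ^ w = 1 ↔ zHom F u ∈ (L : Set (GL (Fin 3) F)) ∩ ZSet q F := by
  classical
  let W : Subgroup Fˣ := L.comap (zHom F) ⊓ (powMonoidHom (q + 1)).ker
  have hW : ∀ v : Fˣ, v ∈ W ↔ zHom F v ∈ (L : Set (GL (Fin 3) F)) ∩ ZSet q F := by
    intro v
    constructor
    · rintro ⟨h1, h2⟩
      refine ⟨h1, v, ?_, rfl⟩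
      have h2' : v ^ (q + 1) = 1 := h2
      rw [← Units.val_pow_eq_pow_val, h2', Units.val_one]
    · rintro ⟨h1, ε, hε, h2⟩
      refine ⟨h1, ?_⟩
      have : (v : F) = ε := by
        have := congrFun (congrFun h2 0) 0
        simpa [coe_zHom] using this
      change v ^ (q + 1) = 1
      ext
      rw [Units.val_pow_eq_pow_val, this, hε, Units.val_one]
  have hcard : Nat.card W = w := by
    rw [← hZ]
    refine Nat.card_congr (Equiv.ofBijective (fun v => ⟨zHom F v.1, (hW _).1 v.2⟩) ⟨?_, ?_⟩)
    · intro v v' h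
      exact Subtype.ext (zHom_injective (congrArg Subtype.val h))
    · rintro ⟨M, hM, ε, hε, h⟩
      have hε0 : ε ≠ 0 := by
        rintro rfl; simp at hε
      have hMe : zHom F (Units.mk0 ε hε0) = M := by
        ext1; rw [h]; rfl
      refine ⟨⟨Units.mk0 ε hε0, (hW _).2 ?_⟩, Subtype.ext hMe⟩
      rw [hMe]
      exact ⟨hM, ε, hε, h⟩
  have hsub : ∀ v ∈ W, (v : F) ^ w = 1 := by
    intro v hv
    have := pow_card_eq_one' (x := (⟨v, hv⟩ : W))
    rw [hcard] at this
    have := congrArg (fun x : W => ((x : Fˣ) : F)) this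
    simpa using this
  rw [← hW]
  refine ⟨fun hu => ?_, hsub u⟩
  let T : Finset F := (univ.filter (fun v : Fˣ => v ∈ W)).image Units.val
  have hT : #T = w := by
    rw [card_image_of_injective _ Units.val_injective, ← hcard, Nat.card_eq_fintype_card,
      Fintype.card_subtype]
  have hTsub : T ⊆ univ.filter (fun x : F => x ^ w = 1) := by
    intro x hx
    simp only [T, mem_image, mem_filter, mem_univ, true_and] at hx ⊢
    obtain ⟨v, hv, rfl⟩ := hx
    exact hsub v hv
  have hTeq := eq_of_subset_of_card_le hTsub (by rw [card_rootsOfUnity_field hwF, hT])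
  have : (u : F) ∈ T := by rw [hTeq]; simpa using hu
  simp only [T, mem_image, mem_filter, mem_univ, true_and] at this
  obtain ⟨v, hv, h⟩ := this
  rwa [← Units.ext h]

/-- Parametrization of `L` by `SL(2, K)` and the `w`-th roots of unity `x`: the pair `(A, x)`
corresponds to the matrix with upper left block `x • ρ A`. -/
lemma exists_param {F K : Type*} [Field F] [Fintype F] [Field K] [CharP K 2] {q w : ℕ}
    (hq : Even q) (hwF : w ∣ Fintype.card F - 1) (hw : w ≠ 0)
    (L : Subgroup (GL (Fin 3) F)) (hLMl : (L : Set (GL (Fin 3) F)) ⊆ MlSet q F)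
    (hZ : Nat.card ((L : Set (GL (Fin 3) F)) ∩ ZSet q F : Set (GL (Fin 3) F)) = w)
    (S : Subgroup (GL (Fin 3) F))
    (e : S ≃* Matrix.SpecialLinearGroup (Fin 2) K)
    (hgen : L = Subgroup.closure
      ((S : Set (GL (Fin 3) F)) ∪ ((L : Set (GL (Fin 3) F)) ∩ ZSet q F)))
    (htriv : (S : Set (GL (Fin 3) F)) ∩ ((L : Set (GL (Fin 3) F)) ∩ ZSet q F) ⊆ {1}) :
    ∃ ρ : Matrix.SpecialLinearGroup (Fin 2) K →* Matrix.SpecialLinearGroup (Fin 2) F,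
      Function.Injective ρ ∧ (∀ A, ρ A 0 1 = (ρ A 1 0) ^ q ∧ ρ A 1 1 = (ρ A 0 0) ^ q) ∧
      ∃ E : Matrix.SpecialLinearGroup (Fin 2) K × {x : F // x ^ w = 1} ≃ L,
      ∀ A x, ((E (A, x) : GL (Fin 3) F) : Matrix (Fin 3) (Fin 3) F) =
        !![ρ A 0 0 * x, ρ A 0 1 * x, 0; ρ A 1 0 * x, ρ A 1 1 * x, 0; 0, 0, 1] := by
  have hSL : S ≤ L := by
    rw [hgen]; exact fun g hg => Subgroup.subset_closure (Or.inl hg)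
  obtain ⟨ρ, hinj, hρ⟩ := exists_rep hq S (fun g hg => hLMl (hSL hg)) e
  refine ⟨ρ, hinj, fun A => ⟨(hρ A).1, (hρ A).2.1⟩, ?_⟩
  have hmem := zHom_mem (q := q) L hZ hwF
  have hx0 : ∀ x : {x : F // x ^ w = 1}, (x : F) ≠ 0 := by
    rintro ⟨x, hx⟩ (rfl : x = 0)
    rw [zero_pow hw] at hx
    exact zero_ne_one hx
  let z : {x : F // x ^ w = 1} → GL (Fin 3) F := fun x => zHom F (Units.mk0 x (hx0 x))
  have hz : ∀ x, z x ∈ (L : Set (GL (Fin 3) F)) ∩ ZSet q F := fun x => (hmem _).1 x.2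
  have hmulz : ∀ A x, ((e.symm A : GL (Fin 3) F) * z x : GL (Fin 3) F) =
      (!![ρ A 0 0 * x, ρ A 0 1 * x, 0; ρ A 1 0 * x, ρ A 1 1 * x, 0; 0, 0, 1] :
        Matrix (Fin 3) (Fin 3) F) := by
    intro A x
    rw [Units.val_mul, (hρ A).2.2, coe_zHom]
    ext i j
    fin_cases i <;> fin_cases j <;> simp [Matrix.mul_apply, Fin.sum_univ_three]
  let E0 : Matrix.SpecialLinearGroup (Fin 2) K × {x : F // x ^ w = 1} → L := fun p =>
    ⟨(e.symm p.1 : GL (Fin 3) F) * z p.2, L.mul_mem (hSL (e.symm p.1).2) (hz p.2).1⟩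
  have hcomm : ∀ s ∈ S, ∀ u : Fˣ, zHom F u * s = s * zHom F u := by
    intro s hs u
    have h := (hρ (e ⟨s, hs⟩)).2.2
    rw [MulEquiv.symm_apply_apply] at h
    ext1
    rw [Units.val_mul, Units.val_mul, coe_zHom, h]
    ext i j
    fin_cases i <;> fin_cases j <;> simp [Matrix.mul_apply, Fin.sum_univ_three, mul_comm]
  have hsurj : ∀ g ∈ L, ∃ s ∈ S, ∃ u : Fˣ, (u : F) ^ w = 1 ∧ s * zHom F u = g := by
    intro g hg
    rw [hgen] at hg
    induction hg using Subgroup.closure_induction with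
    | mem g hg =>
      rcases hg with hg | hg
      · exact ⟨g, hg, 1, by simp, by simp⟩
      · obtain ⟨ε, hε, h⟩ := hg.2
        have hε0 : ε ≠ 0 := by
          rintro rfl; simp at hε
        have hge : zHom F (Units.mk0 ε hε0) = g := by
          ext1; rw [h]; rfl
        refine ⟨1, S.one_mem, Units.mk0 ε hε0, (hmem _).2 (by rw [hge]; exact hg), ?_⟩
        rw [one_mul, hge]
    | one => exact ⟨1, S.one_mem, 1, by simp, by simp⟩
    | mul g k _ _ hg hk =>
      obtain ⟨s, hs, u, hu, rfl⟩ := hg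
      obtain ⟨t, ht, v, hv, rfl⟩ := hk
      refine ⟨s * t, S.mul_mem hs ht, u * v, by rw [Units.val_mul, mul_pow, hu, hv, one_mul], ?_⟩
      rw [map_mul, mul_assoc, mul_assoc, ← mul_assoc t, ← hcomm t ht u, mul_assoc]
    | inv g _ hg =>
      obtain ⟨s, hs, u, hu, rfl⟩ := hg
      refine ⟨s⁻¹, S.inv_mem hs, u⁻¹, by simp [hu], ?_⟩
      rw [_root_.mul_inv_rev, map_inv, ← map_inv, hcomm _ (S.inv_mem hs)]
  refine ⟨Equiv.ofBijective E0 ⟨?_, ?_⟩, fun A x => hmulz A x⟩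
  · rintro ⟨A, x⟩ ⟨B, y⟩ h
    have h' : (e.symm A : GL (Fin 3) F) * z x = (e.symm B : GL (Fin 3) F) * z y :=
      congrArg Subtype.val h
    have h1 : ((e.symm B : GL (Fin 3) F))⁻¹ * (e.symm A : GL (Fin 3) F) = z y * (z x)⁻¹ := by
      rw [inv_mul_eq_iff_eq_mul, ← mul_assoc, eq_mul_inv_iff_mul_eq, h']
    have hone : ((e.symm B : GL (Fin 3) F))⁻¹ * (e.symm A : GL (Fin 3) F) = 1 := by
      apply htriv
      refine ⟨S.mul_mem (S.inv_mem (e.symm B).2) (e.symm A).2, ?_⟩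
      rw [h1]
      simp only [z]
      rw [← map_inv, ← map_mul]
      refine (hmem _).1 ?_
      simp [mul_pow, x.2, y.2]
    have hAB : A = B := by
      rw [inv_mul_eq_one] at hone
      exact (e.symm.injective (Subtype.ext hone)).symm
    subst hAB
    have hxy := zHom_injective (mul_left_cancel h')
    have hxy' := congrArg Units.val hxy
    exact Prod.ext rfl (Subtype.ext hxy')
  · rintro ⟨g, hg⟩
    obtain ⟨s, hs, u, hu, h⟩ := hsurj g hg
    refine ⟨(e ⟨s, hs⟩, ⟨u, hu⟩), Subtype.ext ?_⟩
    simp only [E0, z, MulEquiv.symm_apply_apply, Units.mk0_val]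
    exact h

/-! ### Summing fixed points over the central factor -/

/-- For fixed `B = ρ A`, the sum over all `w`-th roots of unity `x` of the number of points fixed by
the matrix with upper left block `x • B`, in terms of `B = 1`, `B ^ w = 1`, `tr B = 0` and
`B ^ (q - 1) = 1` only. -/
lemma sum_fix {F : Type*} [Field F] [Fintype F] [DecidableEq F] [CharP F 2] {q w : ℕ}
    (hF : Fintype.card F = q ^ 2) (hadd : ∀ x y : F, (x + y) ^ q = x ^ q + y ^ q)
    (hq : Even q) (hw : w ∣ q + 1)
    (B : Matrix.SpecialLinearGroup (Fin 2) F) (h01 : B 0 1 = (B 1 0) ^ q)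
    (h11 : B 1 1 = (B 0 0) ^ q) :
    ∑ x : {x : F // x ^ w = 1},
      (#{p : F × F | p.1 ^ (q + 1) - p.2 ^ (q + 1) = 1 ∧
          B 0 0 * x * p.1 + B 0 1 * x * p.2 = p.1 ∧ B 1 0 * x * p.1 + B 1 1 * x * p.2 = p.2}
        + #{y : F | y ^ (q + 1) = 1 ∧ B 0 0 * x * y + B 0 1 * x = y * (B 1 0 * x * y + B 1 1 * x)})
      = (if B = 1 then q ^ 3 - q + w * (q + 1) else 0)
        + (q + 1) * (if B ≠ 1 ∧ B ^ w = 1 then 2 else 0)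
        + w * ((if B ≠ 1 ∧ B 0 0 + B 1 1 = 0 then 1 else 0)
          + (if B ≠ 1 ∧ B ^ (q - 1) = 1 then 2 else 0)) := by
  have hq1 := one_lt_of_card hF
  have hw0 : w ≠ 0 := by rintro rfl; simp at hw
  have hwF : w ∣ Fintype.card F - 1 := hw.trans (dvd_card_sub_one hF).2
  have hwodd : Odd w := Odd.of_dvd_nat hq.add_one hw
  have hac : B 0 0 ^ (q + 1) - B 1 0 ^ (q + 1) = 1 := by
    have := B.det_coe
    rw [Matrix.det_fin_two, h01, h11] at this
    rw [pow_succ, pow_succ]; linear_combination this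
  have hB1 : B = 1 ↔ B 0 0 = 1 ∧ B 1 0 = 0 := by
    constructor
    · rintro rfl; simp
    · rintro ⟨h0, h1⟩
      ext i j
      fin_cases i <;> fin_cases j <;> simp [h01, h11, h0, h1]
      omega
  rw [sum_add_distrib]
  -- the points at infinity do not see the scalar `x`
  have hinf : ∀ x : {x : F // x ^ w = 1},
      #{y : F | y ^ (q + 1) = 1 ∧ B 0 0 * x * y + B 0 1 * x = y * (B 1 0 * x * y + B 1 1 * x)}
      = (if B = 1 then q + 1 else 0) + ((if B ≠ 1 ∧ B 0 0 + B 1 1 = 0 then 1 else 0)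
          + (if B ≠ 1 ∧ B ^ (q - 1) = 1 then 2 else 0)) := by
    intro x
    have hx0 : (x : F) ≠ 0 := by
      intro h; have := x.2; rw [h, zero_pow hw0] at this; exact zero_ne_one this
    have hset : #{y : F | y ^ (q + 1) = 1 ∧
          B 0 0 * x * y + B 0 1 * x = y * (B 1 0 * x * y + B 1 1 * x)}
        = #{y : F | y ^ (q + 1) = 1 ∧ B 0 0 * y + B 1 0 ^ q = y * (B 1 0 * y + B 0 0 ^ q)} := by
      congr 1
      ext y
      simp only [mem_filter, mem_univ, true_and, and_congr_right_iff]
      intro _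
      rw [h01, h11]
      rw [← mul_right_inj' hx0 (b := B 0 0 * y + B 1 0 ^ q)]
      constructor <;> intro h <;> linear_combination h
    rw [hset]
    by_cases h1 : B = 1
    · obtain ⟨h0, hc⟩ := hB1.1 h1
      rw [if_pos h1, if_neg (fun h => h.1 h1), if_neg (fun h => h.1 h1), add_zero, add_zero]
      refine Eq.trans ?_ (card_rootsOfUnity_field (F := F) (n := q + 1) (dvd_card_sub_one hF).2)
      congr 1
      ext y
      rw [h0, hc]
      simp [zero_pow (show q ≠ 0 by omega)]
    · rw [card_fix_infinity hF hadd hac (fun h => h1 (hB1.2 h)), card_split_one, ← h11,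
        card_eigenvalues (dvd_card_sub_one hF).1 (by
          obtain ⟨k, hk⟩ := hq; exact ⟨k - 1, by omega⟩) B]
      simp [h1]
  -- a nonzero affine contribution comes from `x = 1` only if `B = 1`, and otherwise from the roots
  -- of unity `x ≠ 1` for which `x⁻¹` is an eigenvalue of `B`
  have haff : ∑ x : {x : F // x ^ w = 1},
      #{p : F × F | p.1 ^ (q + 1) - p.2 ^ (q + 1) = 1 ∧
          B 0 0 * x * p.1 + B 0 1 * x * p.2 = p.1 ∧ B 1 0 * x * p.1 + B 1 1 * x * p.2 = p.2}
      = (if B = 1 then q ^ 3 - q else 0) + (q + 1) * (if B ≠ 1 ∧ B ^ w = 1 then 2 else 0) := by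
    have hpt : ∀ x : F, x ^ w = 1 →
      #{p : F × F | p.1 ^ (q + 1) - p.2 ^ (q + 1) = 1 ∧
          B 0 0 * x * p.1 + B 0 1 * x * p.2 = p.1 ∧ B 1 0 * x * p.1 + B 1 1 * x * p.2 = p.2}
      = (if x = 1 then (if B = 1 then q ^ 3 - q else 0) else 0)
        + if x ^ w = 1 ∧ x ≠ 1 ∧ x ^ 2 + (B 0 0 + B 1 1) * x + 1 = 0 then q + 1 else 0 := by
      intro x hx
      by_cases hx1 : x = 1
      · subst hx1
        simp only [mul_one, if_true, ne_eq, not_true_eq_false, false_and, and_false, if_false,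
          add_zero]
        by_cases h1 : B = 1
        · obtain ⟨h0, hc⟩ := hB1.1 h1
          rw [if_pos h1, ← card_affine hF hadd]
          congr 1
          ext p
          rw [h01, h11, h0, hc]
          simp [zero_pow (show q ≠ 0 by omega)]
        · rw [if_neg h1, h01, h11]
          exact card_fix_affine_one hF hadd (fun h => h1 (hB1.2 h))
      · have hx0 : x ≠ 0 := by
          intro h; rw [h, zero_pow hw0] at hx; exact zero_ne_one hx
        have hl : (x⁻¹) ^ (q + 1) = 1 := by
          obtain ⟨k, hk⟩ := hw
          rw [hk, inv_pow, pow_mul, hx, one_pow, inv_one]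
        have hl1 : x⁻¹ ≠ 1 := by simpa using hx1
        have := card_fix_affine hF hadd hac hl hl1
        rw [if_neg hx1, zero_add]
        have hc : (x⁻¹ ^ 2 + (B 0 0 + B 0 0 ^ q) * x⁻¹ + 1 = 0) ↔
            (x ^ w = 1 ∧ x ≠ 1 ∧ x ^ 2 + (B 0 0 + B 1 1) * x + 1 = 0) := by
          rw [h11]
          constructor
          · intro h
            refine ⟨hx, hx1, ?_⟩
            field_simp at h
            linear_combination h
          · rintro ⟨-, -, h⟩
            field_simp
            linear_combination h
        rw [← if_congr hc rfl rfl, ← this]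
        congr 1
        ext p
        simp only [mem_filter, mem_univ, true_and, and_congr_right_iff]
        intro _
        rw [h01, h11, eq_inv_mul_iff_mul_eq₀ hx0, eq_inv_mul_iff_mul_eq₀ hx0]
        constructor <;> rintro ⟨h, h'⟩ <;>
          exact ⟨by linear_combination h, by linear_combination h'⟩
    rw [sum_congr rfl (fun x _ => hpt x.1 x.2), sum_add_distrib]
    congr 1
    · rw [Fintype.sum_eq_single (⟨1, one_pow w⟩ : {x : F // x ^ w = 1})]
      · simp
      · intro x hx
        rw [if_neg]
        intro h; exact hx (Subtype.ext h)
    · rw [← card_eigenvalues hwF hwodd B, ← sum_subtype ({x : F | x ^ w = 1} : Finset F)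
        (by simp) (fun x : F => if x ^ w = 1 ∧ x ≠ 1 ∧ x ^ 2 + (B 0 0 + B 1 1) * x + 1 = 0
          then q + 1 else 0), ← sum_filter, sum_const, smul_eq_mul, mul_comm, filter_filter]
      congr 2
      ext x
      simp
  rw [haff, sum_congr rfl (fun x _ => hinf x), sum_const, card_univ, Fintype.card_subtype,
    card_rootsOfUnity_field hwF, smul_eq_mul]
  split_ifs <;> ring

/-- By Cayley–Hamilton, `A ^ 2 = tr A • A + 1` in characteristic two. This makes the condition
`tr (ρ A) = 0` one on the group element `A` itself. -/
lemma trace_eq_zero_iff {K : Type*} [Field K] [CharP K 2]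
    (A : Matrix.SpecialLinearGroup (Fin 2) K) : A 0 0 + A 1 1 = 0 ↔ A ^ 2 = 1 := by
  have h2 : (2 : K) = 0 := CharTwo.two_eq_zero
  have hd := A.det_coe
  rw [Matrix.det_fin_two] at hd
  rw [pow_two]
  constructor
  · intro h
    ext i j
    rw [SL_mul_apply]
    fin_cases i <;> fin_cases j <;> simp
    · linear_combination A 0 0 * h - hd - h2
    · linear_combination A 0 1 * h
    · linear_combination A 1 0 * h
    · linear_combination A 1 1 * h - hd - h2
  · intro h
    have e : ∀ i j, A i 0 * A 0 j + A i 1 * A 1 j = (1 : Matrix.SpecialLinearGroup (Fin 2) K) i j := by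
      intro i j; rw [← SL_mul_apply, h]
    have e00 := e 0 0
    have e01 := e 0 1
    have e10 := e 1 0
    have e11 := e 1 1
    simp at e00 e01 e10 e11
    by_contra ht
    have h01 : A 0 1 = 0 := by
      have : A 0 1 * (A 0 0 + A 1 1) = 0 := by linear_combination e01
      exact (mul_eq_zero.1 this).resolve_right ht
    apply ht
    have : (A 0 0 + A 1 1) ^ 2 = 0 := by
      rw [h01] at e00 e11
      linear_combination e00 + e11 + h2 * (1 + A 0 0 * A 1 1)
    exact pow_eq_zero_iff (two_ne_zero) |>.1 this

/-! ### The orbit count -/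

/-- Burnside's lemma for `L`, with the fixed points expressed through the numbers of elements of
`SL(2, K)` killed by `w`, by `q - 1`, and by `2` (of the last there are `|K| ^ 2 - 1` nontrivial
ones). -/
lemma orbit_count {F K : Type*} [Field F] [Fintype F] [DecidableEq F] [CharP F 2]
    [Field K] [Fintype K] [DecidableEq K] [CharP K 2] {q w : ℕ}
    (hF : Fintype.card F = q ^ 2) (hadd : ∀ x y : F, (x + y) ^ q = x ^ q + y ^ q)
    (hq : Even q) (hw : w ∣ q + 1)
    (L : Subgroup (GL (Fin 3) F)) (hLMl : (L : Set (GL (Fin 3) F)) ⊆ MlSet q F)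
    (hZ : Nat.card ((L : Set (GL (Fin 3) F)) ∩ ZSet q F : Set (GL (Fin 3) F)) = w)
    (S : Subgroup (GL (Fin 3) F))
    (e : S ≃* Matrix.SpecialLinearGroup (Fin 2) K)
    (hgen : L = Subgroup.closure
      ((S : Set (GL (Fin 3) F)) ∪ ((L : Set (GL (Fin 3) F)) ∩ ZSet q F)))
    (htriv : (S : Set (GL (Fin 3) F)) ∩ ((L : Set (GL (Fin 3) F)) ∩ ZSet q F) ⊆ {1}) :
    numOrbits L (hermitianPts q F) *
        (Fintype.card K * (Fintype.card K - 1) * (Fintype.card K + 1) * w)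
      = (q ^ 3 - q + w * (q + 1))
        + (q + 1) * (2 * #{A : Matrix.SpecialLinearGroup (Fin 2) K | A ≠ 1 ∧ A ^ w = 1})
        + w * ((Fintype.card K ^ 2 - 1)
          + 2 * #{A : Matrix.SpecialLinearGroup (Fin 2) K | A ≠ 1 ∧ A ^ (q - 1) = 1}) := by
  classical
  have hw0 : w ≠ 0 := by rintro rfl; simp at hw
  have hwF : w ∣ Fintype.card F - 1 := hw.trans (dvd_card_sub_one hF).2
  obtain ⟨ρ, hinj, hρ, E, hE⟩ := exists_param hq hwF hw0 L hLMl hZ S e hgen htriv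
  let _ : Fintype L := Fintype.ofFinite L
  have hcardL : Fintype.card L
      = Fintype.card K * (Fintype.card K - 1) * (Fintype.card K + 1) * w := by
    rw [← Fintype.card_congr E, Fintype.card_prod, card_SL, Fintype.card_subtype,
      card_rootsOfUnity_field hwF]
  rw [← hcardL, ← burnside L (hermitianPts q F) (fun g hg x hx => glAct_mem hF hadd (hLMl hg) hx),
    ← Equiv.sum_comp E, Fintype.sum_prod_type]
  have hone : ∀ A, ρ A = 1 ↔ A = 1 := fun A => map_eq_one_iff ρ hinj
  have hpow : ∀ A n, (ρ A) ^ n = 1 ↔ A ^ n = 1 := fun A n => by rw [← map_pow, hone]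
  have hA : ∀ A : Matrix.SpecialLinearGroup (Fin 2) K,
      ∑ x : {x : F // x ^ w = 1}, Nat.card {y : hermitianPts q F //
        glAct (E (A, x) : GL (Fin 3) F) (y : Projectivization F (Fin 3 → F)) = y}
      = (if A = 1 then q ^ 3 - q + w * (q + 1) else 0)
        + (q + 1) * (if A ≠ 1 ∧ A ^ w = 1 then 2 else 0)
        + w * ((if A ≠ 1 ∧ A 0 0 + A 1 1 = 0 then 1 else 0)
          + (if A ≠ 1 ∧ A ^ (q - 1) = 1 then 2 else 0)) := by
    intro A
    rw [sum_congr rfl (fun x _ => card_fix (hE A x)),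
      sum_fix hF hadd hq hw (ρ A) (hρ A).1 (hρ A).2]
    simp only [ne_eq, trace_eq_zero_iff, hpow, hone]
  rw [sum_congr rfl (fun A _ => hA A)]
  simp only [sum_add_distrib, ← mul_sum]
  rw [sum_ite_eq' univ 1, if_pos (mem_univ _), ← sum_filter, ← sum_filter, ← sum_filter,
    sum_const, sum_const, sum_const, card_SL_involutions]
  simp only [smul_eq_mul]
  ring

lemma coprime_pred_succ {q : ℕ} (hq : Even q) (hq0 : 0 < q) : Nat.Coprime (q - 1) (q + 1) := by
  have h1 : q + 1 = (q - 1) + 2 := by omega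
  have hodd : Odd (q - 1) := by
    obtain ⟨k, hk⟩ := hq; exact ⟨k - 1, by omega⟩
  rw [h1]
  simpa using hodd.coprime_two_right

end HermitianOrbits

theorem stmt7 (h q f w : ℕ) (hh : 1 ≤ h) (hq : q = 2 ^ h)
    (F : Type*) [Field F] [Fintype F] (hF : Fintype.card F = q ^ 2)
    (hf : f ∣ h) (hf1 : 1 < f) (hw : w ∣ q + 1)
    (L : Subgroup (GL (Fin 3) F)) (hLMl : (L : Set (GL (Fin 3) F)) ⊆ MlSet q F)
    (hZcard : Nat.card ((L : Set (GL (Fin 3) F)) ∩ ZSet q F : Set (GL (Fin 3) F)) = w)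
    (S : Subgroup (GL (Fin 3) F))
    (hSiso : Nonempty (↥S ≃* Matrix.SpecialLinearGroup (Fin 2) (GaloisField 2 f)))
    (hgen : L = Subgroup.closure
      ((S : Set (GL (Fin 3) F)) ∪ ((L : Set (GL (Fin 3) F)) ∩ ZSet q F)))
    (htriv : (S : Set (GL (Fin 3) F)) ∩ ((L : Set (GL (Fin 3) F)) ∩ ZSet q F) ⊆ {1}) :
    (Odd (h / f) →
      (numOrbits L (hermitianPts q F) : ℚ)
        = 1 + ((q : ℚ) - 2 ^ f) / (2 ^ f * ((2 : ℚ) ^ (2 * f) - 1))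
          + ((q : ℚ) + 1) * (Nat.gcd w (2 ^ f + 1) : ℚ) / (((2 : ℚ) ^ f + 1) * (w : ℚ))
          + (((q : ℚ) + 1) / (w : ℚ))
            * ((q : ℚ) * ((q : ℚ) - 1) - 2 ^ f * ((2 : ℚ) ^ f - 1))
            / (2 ^ f * ((2 : ℚ) ^ f - 1) * ((2 : ℚ) ^ f + 1))) ∧
    (Even (h / f) →
      (numOrbits L (hermitianPts q F) : ℚ)
        = 2 + ((q : ℚ) - 2 ^ (2 * f)) / (2 ^ f * ((2 : ℚ) ^ (2 * f) - 1))
          + ((q : ℚ) / 2 ^ f) * (((q : ℚ) - 1) / ((2 : ℚ) ^ (2 * f) - 1))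
            * (((q : ℚ) + 1) / (w : ℚ))) := by
  classical
  have hf0 : f ≠ 0 := by omega
  obtain ⟨e⟩ := hSiso
  let _ : Fintype (GaloisField 2 f) := Fintype.ofFinite _
  have hK : Fintype.card (GaloisField 2 f) = 2 ^ f := by
    rw [← Nat.card_eq_fintype_card, GaloisField.card 2 f hf0]
  have hF' : Fintype.card F = 2 ^ (h * 2) := by rw [hF, hq, pow_mul]
  have : CharP F 2 := charP_of_card_eq_prime_pow hF'
  have hadd : ∀ x y : F, (x + y) ^ q = x ^ q + y ^ q := by
    intro x y; rw [hq, add_pow_char_pow]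
  have hqe : Even q := by rw [hq]; exact (Nat.even_pow.2 ⟨even_two, by omega⟩)
  have hq1 := HermitianOrbits.one_lt_of_card hF
  have hdvd := HermitianOrbits.dvd_card_sub_one hF
  have hcop := HermitianOrbits.coprime_pred_succ hqe (by omega)
  -- `F` contains a field with `2 ^ f` elements because `f ∣ 2 * h`; the eigenvalues of elements of
  -- `SL(2, 2 ^ f)` that matter all lie in `F`
  let _ : Algebra (ZMod 2) F := ZMod.algebra F 2
  have hφ : Nonempty (GaloisField 2 f →ₐ[ZMod 2] F) := by
    apply FiniteField.nonempty_algHom_of_finrank_dvd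
    rw [GaloisField.finrank 2 hf0]
    have h1 := Module.card_eq_pow_finrank (K := ZMod 2) (V := F)
    rw [ZMod.card, hF'] at h1
    rw [← Nat.pow_right_injective le_rfl h1]
    exact hf.mul_right 2
  obtain ⟨φ⟩ := hφ
  have hcount := HermitianOrbits.orbit_count hF hadd hqe hw L hLMl hZcard S e hgen htriv
  have hodd1 : Odd (q - 1) := by obtain ⟨k, hk⟩ := hqe; exact ⟨k - 1, by omega⟩
  rw [HermitianOrbits.card_SL_torsion φ.toRingHom hK (hw.trans hdvd.2)
      (Odd.of_dvd_nat hqe.add_one hw),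
    HermitianOrbits.card_SL_torsion φ.toRingHom hK hdvd.1 hodd1, hK] at hcount
  have hqu : q = (2 ^ f) ^ (h / f) := by rw [hq, ← pow_mul, Nat.mul_div_cancel' hf]
  have hu4 : 4 ≤ 2 ^ f := (Nat.pow_le_pow_right (n := 2) (by norm_num) hf1)
  have hw0 : w ≠ 0 := by rintro rfl; simp at hw
  have hcast : (2 : ℚ) ^ f = ((2 ^ f : ℕ) : ℚ) := by push_cast; rfl
  rw [pow_mul' (2 : ℚ), hcast]
  generalize (2 ^ f : ℕ) = u at *
  have hq3 : q ≤ q ^ 3 := Nat.le_self_pow (by norm_num) q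
  have hu2 : 1 ≤ u ^ 2 := Nat.one_le_pow _ _ (by omega)
  have hd1 : u - 1 ∣ q - 1 := by
    rw [hqu]; simpa using Nat.sub_dvd_pow_sub_pow u 1 (h / f)
  have hg1 : Nat.gcd w (u - 1) = 1 :=
    Nat.Coprime.symm (Nat.Coprime.coprime_dvd_left hd1 (hcop.coprime_dvd_right hw))
  have hg2 : Nat.gcd (q - 1) (u - 1) = u - 1 := Nat.gcd_eq_right hd1
  rw [hg1, hg2] at hcount
  have huQ : (4 : ℚ) ≤ u := by exact_mod_cast hu4
  have hu0 : (u : ℚ) ≠ 0 := by linarith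
  have hum : (u : ℚ) - 1 ≠ 0 := by linarith
  have hup : (u : ℚ) + 1 ≠ 0 := by linarith
  have husq : (u : ℚ) ^ 2 - 1 ≠ 0 := by
    rw [show (u : ℚ) ^ 2 - 1 = (u - 1) * (u + 1) by ring]; exact mul_ne_zero hum hup
  have hwQ : (w : ℚ) ≠ 0 := by exact_mod_cast hw0
  constructor
  · intro hk
    have hd2 : u + 1 ∣ q + 1 := by
      rw [hqu]; simpa using Odd.nat_add_dvd_pow_add_pow u 1 hk
    have hg3 : Nat.gcd (q - 1) (u + 1) = 1 := hcop.coprime_dvd_right hd2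
    have hgpos : 1 ≤ Nat.gcd w (u + 1) := Nat.gcd_pos_of_pos_right _ (by omega)
    rw [hg3] at hcount
    have hc := congrArg (Nat.cast : ℕ → ℚ) hcount
    generalize Nat.gcd w (u + 1) = g at *
    generalize numOrbits L (hermitianPts q F) = N at *
    push_cast [Nat.cast_sub hq3, Nat.cast_sub hu2, Nat.cast_sub hgpos,
      Nat.cast_sub (show 1 ≤ u by omega), Nat.cast_sub (show 1 ≤ u - 1 by omega)] at hc
    field_simp
    linear_combination ((u : ℚ) - 1) * (u + 1) * hc
  · intro hk
    have hd2 : u ^ 2 - 1 ∣ q - 1 := by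
      obtain ⟨j, hj⟩ := hk
      rw [hqu, hj, ← two_mul, pow_mul]
      simpa using Nat.sub_dvd_pow_sub_pow (u ^ 2) 1 j
    have hd3 : u + 1 ∣ q - 1 := by
      refine Dvd.dvd.trans ?_ hd2
      have := Nat.sq_sub_sq u 1
      rw [one_pow] at this
      rw [this]
      exact dvd_mul_right _ _
    have hg3 : Nat.gcd (q - 1) (u + 1) = u + 1 := Nat.gcd_eq_right hd3
    have hg4 : Nat.gcd w (u + 1) = 1 :=
      Nat.Coprime.symm (Nat.Coprime.coprime_dvd_left hd3 (hcop.coprime_dvd_right hw))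
    rw [hg3, hg4] at hcount
    have hc := congrArg (Nat.cast : ℕ → ℚ) hcount
    generalize numOrbits L (hermitianPts q F) = N at *
    push_cast [Nat.cast_sub hq3, Nat.cast_sub hu2,
      Nat.cast_sub (show 1 ≤ u by omega), Nat.cast_sub (show 1 ≤ u - 1 by omega)] at hc
    field_simp
    linear_combination hc
end
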